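/- Let r ≥ 3 and q = p^h > 4 with p prime, h ≥ 1, and let V be a quasi-Hermitian variety of PG(r,q^2) whose characteristic vector v^V belongs to C_p. Let π be a plane of PG(r,q^2) with |π ∩ V| ≤ q^3 + 2q^2. Then either there exist at most q+1 distinct lines of π such that the characteristic vector of π ∩ V (as a function on the points of π with values in F_p) equals the sum of the characteristic vectors of these lines each with coefficient 1, or π ∩ V is a classical unital of π. -/

import Mathlib

/-!
Common framework: `ProjPoint F n` is the set of points of the projective space
PG(n-1, |F|) (so PG(r, q²) corresponds to `n = r + 1` and `Fintype.card F = q ^ 2`).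
Projective subspaces of projective dimension `k` are the submodules of `Fin n → F`
of `finrank` equal to `k + 1`; lines have finrank 2, planes finrank 3 and
hyperplanes finrank `n - 1 = r`.
-/

open Module Matrix

/-- The points of the projective space PG(n-1, |F|): one-dimensional subspaces
of `F^n`. -/
def ProjPoint (F : Type) [Field F] (n : ℕ) : Type :=
  {W : Submodule F (Fin n → F) // finrank F W = 1}

/-- The set of projective points lying in a given subspace `W`. -/
def pointsIn (F : Type) [Field F] (n : ℕ) (W : Submodule F (Fin n → F)) :
    Set (ProjPoint F n) :=
  {P | P.1 ≤ W}

/-- The number of points of `V` lying in the subspace `W`. -/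
noncomputable def secant (F : Type) [Field F] (n : ℕ) (V : Set (ProjPoint F n))
    (W : Submodule F (Fin n → F)) : ℕ :=
  (V ∩ pointsIn F n W).ncard

/-- The characteristic vector of a set of projective points, with values in `F_p`. -/
noncomputable def charVec (F : Type) [Field F] (p n : ℕ) (S : Set (ProjPoint F n)) :
    ProjPoint F n → ZMod p :=
  Set.indicator S 1

/-- `C_p`: the `F_p`-code spanned by the characteristic vectors of hyperplanes. -/
def hypCode (F : Type) [Field F] (p n : ℕ) :
    Submodule (ZMod p) (ProjPoint F n → ZMod p) :=
  Submodule.span (ZMod p)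
    {v | ∃ H : Submodule F (Fin n → F), finrank F H = n - 1 ∧
      v = charVec F p n (pointsIn F n H)}

/-- A quasi-Hermitian variety of PG(r, q²): it has the size of a non-singular
Hermitian variety and the same two intersection numbers with hyperplanes.
(All identities are stated multiplied through by `q² - 1`.) -/
def IsQuasiHermitian (F : Type) [Field F] (q r : ℕ)
    (V : Set (ProjPoint F (r + 1))) : Prop :=
  (V.ncard : ℤ) * ((q : ℤ) ^ 2 - 1)
      = ((q : ℤ) ^ (r + 1) + (-1) ^ r) * ((q : ℤ) ^ r - (-1) ^ r) ∧
  ∀ H : Submodule F (Fin (r + 1) → F), finrank F H = r →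
    ((secant F (r + 1) V H : ℤ) * ((q : ℤ) ^ 2 - 1)
        = ((q : ℤ) ^ r + (-1) ^ (r - 1)) * ((q : ℤ) ^ (r - 1) - (-1) ^ (r - 1)) ∨
     (secant F (r + 1) V H : ℤ) * ((q : ℤ) ^ 2 - 1)
        = ((q : ℤ) ^ 2 - 1)
          + (q : ℤ) ^ 2 * (((q : ℤ) ^ (r - 1) + (-1) ^ r) * ((q : ℤ) ^ (r - 2) - (-1) ^ r)))

/-- The zero set, in PG(n-1,|F|), of the Hermitian form `x ↦ xᵀ A x^(q)`. -/
def hermSet (F : Type) [Field F] (q n : ℕ) (A : Matrix (Fin n) (Fin n) F) :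
    Set (ProjPoint F n) :=
  {P | ∀ x ∈ P.1, ∑ i, ∑ j, x i * A i j * (x j) ^ q = 0}

/-- A non-singular Hermitian variety of PG(n-1, q²). -/
def IsNonsingHermitian (F : Type) [Field F] (q n : ℕ)
    (V : Set (ProjPoint F n)) : Prop :=
  ∃ A : Matrix (Fin n) (Fin n) F, IsUnit A.det ∧
    Aᵀ = A.map (fun a => a ^ q) ∧ V = hermSet F q n A

/-- A singular Hermitian variety of PG(n-1, q²) whose singular space (the radical
of the Hermitian form) has projective dimension `d`. -/
def IsSingularHermitian (F : Type) [Field F] (q n d : ℕ)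
    (S : Set (ProjPoint F n)) : Prop :=
  ∃ A : Matrix (Fin n) (Fin n) F,
    Aᵀ = A.map (fun a => a ^ q) ∧
    finrank F (LinearMap.ker (Matrix.toLin' Aᵀ)) = d + 1 ∧
    S = hermSet F q n A

/-- A `d`-singular quasi-Hermitian variety of PG(r, q²). -/
def IsSingularQuasiHermitian (F : Type) [Field F] (q r d : ℕ)
    (S : Set (ProjPoint F (r + 1))) : Prop :=
  ∃ S₀ : Set (ProjPoint F (r + 1)), IsSingularHermitian F q (r + 1) d S₀ ∧
    S.ncard = S₀.ncard ∧
    ∀ H : Submodule F (Fin (r + 1) → F), finrank F H = r →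
      ∃ H₀ : Submodule F (Fin (r + 1) → F), finrank F H₀ = r ∧
        secant F (r + 1) S H = secant F (r + 1) S₀ H₀

/-- `U` is a classical unital (Hermitian curve) of the plane `π` of PG(n-1, q²):
in some coordinatization `e` of `π`, it is the zero set of a non-degenerate
Hermitian form on `F³`. -/
def IsClassicalUnital (F : Type) [Field F] (q n : ℕ)
    (π : Submodule F (Fin n → F)) (U : Set (ProjPoint F n)) : Prop :=
  ∃ e : (Fin 3 → F) →ₗ[F] (Fin n → F), LinearMap.ker e = ⊥ ∧ LinearMap.range e = π ∧
    ∃ A : Matrix (Fin 3) (Fin 3) F, IsUnit A.det ∧ Aᵀ = A.map (fun a => a ^ q) ∧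
      U = {P | ∃ y : Fin 3 → F, y ≠ 0 ∧ P.1 = Submodule.span F {e y} ∧
        ∑ i, ∑ j, y i * A i j * (y j) ^ q = 0}

/-!
Let `f` be a combination of characteristic functions of kernels of linear forms on `F³`. Then
`∑ y, f (u + x • b + y • t) * y ^ j` is a polynomial in `x` of degree at most `j`, so the Hankel
determinants of these power sums control how many values `y` occur on each line through the point
`t`. If `t` lies outside the support `B` of `f`, this gives `s (q² + 1) + s' ≤ |B| + s²` for two
lines through `t` that meet `B` in `s` and `s'` points.

Applied to the planes through a line of `PG(r, q²)`, this bound and the size of `V` force every line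
to meet `V` in at most `q + 1` or at least `q² - q - 1` points. Put `B = π ∩ V`. If `π` has no line
of the second kind, then the sum of `(s - 1)(q + 1 - s)` over its lines is at most `0`, and `B` is a
unital. Otherwise the long secants cover `B` and there are at most `q + 5` of them; subtracting them
from the codeword of `B` leaves a codeword with too small a support to be nonzero.

For a unital in the code and a point `t` off it, the points of the unital on a secant through `t`
have, up to exponent `q`, the power sums of a single point, which depends linearly on the secant:
these points form the polar line of `t`. In coordinates given by a self-polar triangle the unital
has an equation `∑ aᵢ yᵢ ^ (q + 1) = 0`.
-/

namespace QuasiHermitian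

/-! ### Point sets of finite projective planes -/

section PointSets

open Finset Configuration ProjectivePlane

section Incidence

/-- The points on a line of a finite incidence structure. -/
noncomputable def pointsOn (P : Type*) {L : Type*} [Finite P] [Membership P L] (l : L) :
    Finset P :=
  (Set.toFinite {x : P | x ∈ l}).toFinset

/-- The pencil of lines through a point of a finite incidence structure. -/
noncomputable def linesThrough {P : Type*} (L : Type*) [Finite L] [Membership P L] (x : P) :
    Finset L :=
  (Set.toFinite {l : L | x ∈ l}).toFinset

open scoped Classical in
/-- The intersection number of a point set with a line. -/
noncomputable def secantCard {P L : Type*} [Membership P L] (S : Finset P) (l : L) : ℕ :=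
  #{x ∈ S | x ∈ l}

open scoped Classical in
/-- The multiplicity of a point in a set of lines, which is the value at that point of the sum
of their characteristic vectors. -/
noncomputable def lineMult {P L : Type*} [Membership P L] (S : Finset L) (x : P) : ℕ :=
  #{l ∈ S | x ∈ l}

variable {P L : Type*} [Membership P L]

@[simp]
theorem mem_pointsOn [Finite P] {l : L} {x : P} : x ∈ pointsOn P l ↔ x ∈ l := by
  simp [pointsOn]

@[simp]
theorem mem_linesThrough [Finite L] {l : L} {x : P} : l ∈ linesThrough L x ↔ x ∈ l := by
  simp [linesThrough]

theorem secantCard_mono {S T : Finset P} (h : S ⊆ T) (l : L) : secantCard S l ≤ secantCard T l := by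
  classical
  exact card_le_card (filter_subset_filter _ h)

theorem secantCard_pos_iff {S : Finset P} {l : L} : 0 < secantCard S l ↔ ∃ x ∈ S, x ∈ l := by
  classical
  simp [secantCard, card_pos, Finset.Nonempty]

theorem lineMult_pos_iff {S : Finset L} {x : P} : 0 < lineMult S x ↔ ∃ l ∈ S, x ∈ l := by
  classical
  simp [lineMult, card_pos, Finset.Nonempty]

theorem lineMult_erase_add_one [DecidableEq L] {S : Finset L} {l : L} (hl : l ∈ S) {x : P}
    (hx : x ∈ l) : lineMult (S.erase l) x + 1 = lineMult S x := by
  classical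
  rw [lineMult, lineMult, filter_erase, card_erase_add_one (mem_filter.2 ⟨hl, hx⟩)]

theorem sum_lineMult (S : Finset L) (E : Finset P) :
    ∑ x ∈ E, lineMult S x = ∑ l ∈ S, secantCard E l := by
  classical
  exact sum_card_bipartiteAbove_eq_sum_card_bipartiteBelow (fun x l => x ∈ l)

theorem sum_indicator_pointsOn_apply [Finite P] {R : Type*} [Semiring R] (S : Finset L) (x : P) :
    (∑ l ∈ S, (pointsOn P l : Set P).indicator (1 : P → R)) x = lineMult S x := by
  classical
  simp [lineMult, Set.indicator_apply, Finset.sum_apply]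

end Incidence

section Counting

variable {P L : Type*} [Membership P L] [ProjectivePlane P L]

theorem secantCard_pointsOn_of_ne [Finite P] {l m : L} (h : l ≠ m) :
    secantCard (pointsOn P l) m = 1 := by
  classical
  obtain ⟨x, hx, huniq⟩ := HasPoints.existsUnique_point P L l m h
  refine card_eq_one.2 ⟨x, ?_⟩
  ext y
  simp only [mem_filter, mem_pointsOn, mem_singleton]
  exact ⟨huniq y, fun hy => hy ▸ hx⟩

theorem lineMult_linesThrough_of_ne [Finite L] {x y : P} (h : x ≠ y) :
    lineMult (linesThrough L x) y = 1 := by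
  classical
  obtain ⟨l, hl, huniq⟩ := HasLines.existsUnique_line P L x y h
  refine card_eq_one.2 ⟨l, ?_⟩
  ext m
  simp only [mem_filter, mem_linesThrough, mem_singleton]
  exact ⟨huniq m, fun hm => hm ▸ hl⟩

theorem sum_linesThrough_secantCard_of_notMem [Finite L] {S : Finset P} {x : P} (hx : x ∉ S) :
    ∑ l ∈ linesThrough L x, secantCard S l = #S := by
  rw [← sum_lineMult, card_eq_sum_ones]
  exact sum_congr rfl fun y hy => lineMult_linesThrough_of_ne (ne_of_mem_of_not_mem hy hx).symm

theorem exists_mem_line_inter_notMem {B : Finset P} {A : Finset L} {x : P} {m : L} (hxm : x ∉ m)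
    (hA : ∀ l ∈ A, x ∈ l) (hcard : secantCard B m < #A) : ∃ l ∈ A, ∃ z ∈ l, z ∈ m ∧ z ∉ B := by
  classical
  by_contra! hc
  have : Nonempty P := ⟨x⟩
  have hmeet (l : L) (hl : l ∈ A) : ∃ z : P, z ∈ l ∧ z ∈ m :=
    (HasPoints.existsUnique_point P L l m fun h => hxm (h ▸ hA l hl)).exists
  choose! f hfl hfm using hmeet
  obtain ⟨l, hl, l', hl', hll', heq⟩ :=
    exists_ne_map_eq_of_card_lt_of_maps_to (t := {z ∈ B | z ∈ m}) hcard (f := f) fun l hl =>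
      mem_filter.2 ⟨hc l hl _ (hfl l hl) (hfm l hl), hfm l hl⟩
  have hfx : x ≠ f l := fun h => hxm (h ▸ hfm l hl)
  exact hll' ((Nondegenerate.eq_or_eq (hA l hl) (hfl l hl) (hA l' hl')
    (heq ▸ hfl l' hl')).resolve_left hfx)

variable [Finite P] [Finite L]

theorem card_linesThrough (x : P) : #(linesThrough L x) = order P L + 1 := by
  rw [← lineCount_eq L x, lineCount, linesThrough, ← Set.ncard_eq_toFinset_card]
  rfl

theorem card_pointsOn (l : L) : #(pointsOn P l) = order P L + 1 := by
  rw [← pointCount_eq P l, pointCount, pointsOn, ← Set.ncard_eq_toFinset_card]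
  rfl

theorem secantCard_pointsOn_self (l : L) : secantCard (pointsOn P l) l = order P L + 1 := by
  classical
  rw [← card_pointsOn l, secantCard, filter_true_of_mem fun _ => mem_pointsOn.1]

theorem secantCard_le_order_add_one (S : Finset P) (l : L) : secantCard S l ≤ order P L + 1 := by
  classical
  rw [← card_pointsOn l]
  exact card_le_card fun x hx => mem_pointsOn.2 (mem_filter.1 hx).2

theorem exists_mem_line_notMem {S : Finset P} {l : L} (h : secantCard S l ≤ order P L) :
    ∃ x ∈ l, x ∉ S := by
  by_contra! hS
  have hsub : pointsOn P l ⊆ S := fun x hx => hS x (mem_pointsOn.1 hx)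
  have := secantCard_mono hsub l
  rw [secantCard_pointsOn_self] at this
  omega

theorem exists_mem_line_ne (x : P) (l : L) : ∃ m : L, x ∈ m ∧ m ≠ l := by
  have h : 1 < #(linesThrough L x) := by
    have := one_lt_order P L
    rw [card_linesThrough]
    omega
  obtain ⟨m, hm, hml⟩ := exists_mem_ne h l
  exact ⟨m, mem_linesThrough.1 hm, hml⟩

theorem sum_linesThrough_secantCard_of_mem {S : Finset P} {x : P} (hx : x ∈ S) :
    ∑ l ∈ linesThrough L x, secantCard S l = #S + order P L := by
  classical
  have hself : lineMult (linesThrough L x) x = order P L + 1 := by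
    rw [← card_linesThrough x, lineMult, filter_true_of_mem fun _ => mem_linesThrough.1]
  have hne : ∑ y ∈ S.erase x, lineMult (linesThrough L x) y = #(S.erase x) := by
    rw [card_eq_sum_ones]
    exact sum_congr rfl fun y hy => lineMult_linesThrough_of_ne (ne_of_mem_erase hy).symm
  rw [← sum_lineMult, ← add_sum_erase _ _ hx, hself, hne, ← card_erase_add_one hx]
  ring

theorem card_add_order_le {S : Finset P} {x : P} {a : ℕ} (hx : x ∈ S)
    (h : ∀ l : L, x ∈ l → secantCard S l ≤ a) : #S + order P L ≤ (order P L + 1) * a := by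
  rw [← sum_linesThrough_secantCard_of_mem hx, ← card_linesThrough x, ← smul_eq_mul]
  exact sum_le_card_nsmul _ _ _ fun l hl => h l (mem_linesThrough.1 hl)

end Counting

section Totals

variable {P L : Type*} [Finite P] [Fintype L] [Membership P L] [ProjectivePlane P L]

theorem sum_secantCard (S : Finset P) : ∑ l : L, secantCard S l = #S * (order P L + 1) := by
  classical
  rw [← sum_lineMult, ← smul_eq_mul]
  refine sum_eq_card_nsmul fun x _ => ?_
  rw [← card_linesThrough (L := L) x, lineMult]
  congr 1
  ext
  simp

theorem sum_secantCard_sq (S : Finset P) :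
    ∑ l : L, secantCard S l ^ 2 = #S * (#S + order P L) := by
  classical
  have hsq (l : L) : secantCard S l ^ 2 = ∑ x ∈ S, if x ∈ l then secantCard S l else 0 := by
    rw [← sum_filter, sum_const, smul_eq_mul, sq, secantCard]
  simp_rw [hsq]
  rw [sum_comm, ← smul_eq_mul]
  refine sum_eq_card_nsmul fun x hx => ?_
  rw [← sum_filter, ← sum_linesThrough_secantCard_of_mem (L := L) hx]
  congr 1
  ext
  simp

end Totals

section SecantBound

/-- The bound on intersection numbers satisfied by supports of codewords of a Desarguesian plane:
through a point outside `S`, a line that meets `S` in `s` points and another one that meets it in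
`t` points satisfy `s * (order + 1) + t ≤ #S + s ^ 2`. -/
def SecantBound {P : Type*} (L : Type*) [Membership P L] [ProjectivePlane P L] (S : Finset P) :
    Prop :=
  ∀ (x : P) (l m : L), x ∉ S → x ∈ l → x ∈ m → l ≠ m →
    secantCard S l * (order P L + 1) + secantCard S m ≤ #S + secantCard S l ^ 2

variable {P L : Type*} [Membership P L] [ProjectivePlane P L]

theorem SecantBound.card_ge_of_secantCard_eq {q : ℕ} (hn : order P L = q ^ 2) {S : Finset P}
    (hS : SecantBound L S) {x : P} (hx : x ∉ S) {l m : L} (hl : x ∈ l) (hm : x ∈ m) (hlm : l ≠ m)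
    (hsl : secantCard S l = q + 1) : q ^ 3 + secantCard S m ≤ #S + q := by
  have hbound := hS x l m hx hl hm hlm
  rw [hn, hsl] at hbound
  nlinarith

variable [Finite P] [Finite L]

theorem SecantBound.exists_le_secantCard {q : ℕ} (hn : order P L = q ^ 2) {S : Finset P}
    (hS : SecantBound L S) {x : P} (hx : x ∈ S) : ∃ l : L, x ∈ l ∧ q + 1 ≤ secantCard S l := by
  classical
  by_contra! hc
  have hq : q < q ^ 2 ∧ 1 < q := by
    have := one_lt_order P L
    rw [hn] at this
    have : 1 < q := by nlinarith
    constructor <;> nlinarith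
  obtain ⟨l, hl, hmax⟩ := exists_max_image (linesThrough L x) (secantCard S)
    (card_pos.1 (by rw [card_linesThrough]; omega))
  rw [mem_linesThrough] at hl
  set s := secantCard S l with hs
  have hsq : s ≤ q := Nat.lt_succ_iff.1 (hc l hl)
  have hcard : #S + q ^ 2 ≤ (q ^ 2 + 1) * s := by
    rw [← hn]
    exact card_add_order_le hx fun m hm => hmax m (mem_linesThrough.2 hm)
  obtain ⟨y, hyl, hyS⟩ : ∃ y ∈ l, y ∉ S := exists_mem_line_notMem (by omega)
  by_cases hsub : ∀ z ∈ S, z ∈ l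
  · obtain ⟨m, hym, hml⟩ := exists_mem_line_ne y l
    have hbound := hS y l m hyS hyl hym hml.symm
    have hSs : #S = s := by rw [hs, secantCard, filter_true_of_mem hsub]
    have : 0 < #S := card_pos.2 ⟨x, hx⟩
    rw [hn, ← hs] at hbound
    nlinarith
  · push Not at hsub
    obtain ⟨z, hzS, hzl⟩ := hsub
    obtain ⟨m, ⟨hym, hzm⟩, -⟩ :=
      HasLines.existsUnique_line P L y z (ne_of_mem_of_not_mem hzS hyS).symm
    have hbound := hS y l m hyS hyl hym fun h => hzl (h ▸ hzm)
    have hm : 0 < secantCard S m := secantCard_pos_iff.2 ⟨z, hzS, hzm⟩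
    rw [hn, ← hs] at hbound
    nlinarith

theorem SecantBound.card_ge_of_short {q : ℕ} (hn : order P L = q ^ 2) {S : Finset P}
    (hS : SecantBound L S) (hne : S.Nonempty) (hshort : ∀ l : L, secantCard S l + q ≤ q ^ 2) :
    (q + 1) * (q ^ 2 - q) ≤ #S := by
  obtain ⟨x, hx⟩ := hne
  obtain ⟨l, -, hs⟩ := hS.exists_le_secantCard hn hx
  have hsq := hshort l
  obtain ⟨y, hyl, hyS⟩ : ∃ y ∈ l, y ∉ S := exists_mem_line_notMem (by omega)
  obtain ⟨m, hym, hml⟩ := exists_mem_line_ne y l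
  have hbound := hS y l m hyS hyl hym hml.symm
  rw [hn] at hbound
  obtain ⟨d, hd⟩ := Nat.exists_eq_add_of_le hsq
  obtain ⟨e, he⟩ := Nat.exists_eq_add_of_le hs
  have hsub : q ^ 2 - q = secantCard S l + d := by omega
  rw [hsub]
  nlinarith

end SecantBound

section Unital

variable {P L : Type*} [Finite P] [Membership P L] [ProjectivePlane P L]

theorem sum_secantCard_sub_mul [Fintype L] {q : ℕ} (hn : order P L = q ^ 2) (S : Finset P) :
    ∑ l : L, ((secantCard S l : ℤ) - 1) * (q + 1 - secantCard S l) =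
      -((#S - ((q : ℤ) ^ 3 + 1)) * (#S - ((q : ℤ) ^ 2 + q + 1))) := by
  have hsum : ∑ l : L, (secantCard S l : ℤ) = #S * ((q : ℤ) ^ 2 + 1) := by
    exact_mod_cast hn ▸ sum_secantCard (L := L) S
  have hsq : ∑ l : L, (secantCard S l : ℤ) ^ 2 = #S * (#S + (q : ℤ) ^ 2) := by
    exact_mod_cast hn ▸ sum_secantCard_sq (L := L) S
  have hlines : (Fintype.card L : ℤ) = ((q : ℤ) ^ 2) ^ 2 + (q : ℤ) ^ 2 + 1 := by
    exact_mod_cast hn ▸ card_lines P L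
  have hterm (l : L) : ((secantCard S l : ℤ) - 1) * (q + 1 - secantCard S l) =
      (q + 2) * secantCard S l - (secantCard S l : ℤ) ^ 2 - (q + 1) := by
    ring
  simp_rw [hterm]
  rw [sum_sub_distrib, sum_sub_distrib, ← mul_sum, hsum, hsq, sum_const, card_univ,
    nsmul_eq_mul, hlines]
  ring

variable [Finite L]

theorem secantCard_eq_of_card_ge {q : ℕ} (hq : 1 < q) (hn : order P L = q ^ 2) {B : Finset P}
    (hcard : q ^ 3 + 1 ≤ #B) (hpos : ∀ l : L, 0 < secantCard B l)
    (hle : ∀ l : L, secantCard B l ≤ q + 1) :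
    #B = q ^ 3 + 1 ∧ ∀ l : L, secantCard B l = 1 ∨ secantCard B l = q + 1 := by
  have := Fintype.ofFinite L
  have hnonneg (l : L) : (0 : ℤ) ≤ ((secantCard B l : ℤ) - 1) * (q + 1 - secantCard B l) := by
    have := hpos l
    have := hle l
    apply mul_nonneg <;> omega
  have hcard' : (q : ℤ) ^ 3 + 1 ≤ #B := by exact_mod_cast hcard
  have hlarge : (q : ℤ) ^ 2 + q + 1 < #B := by
    have : (2 : ℤ) ≤ q := by exact_mod_cast hq
    nlinarith
  have hsum := sum_secantCard_sub_mul hn B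
  have hzero : ∑ l : L, ((secantCard B l : ℤ) - 1) * (q + 1 - secantCard B l) = 0 := by
    refine le_antisymm ?_ (sum_nonneg fun l _ => hnonneg l)
    rw [hsum, neg_nonpos]
    exact mul_nonneg (sub_nonneg.2 hcard') (sub_nonneg.2 hlarge.le)
  constructor
  · rw [hsum, neg_eq_zero, mul_eq_zero, sub_eq_zero, sub_eq_zero] at hzero
    exact_mod_cast hzero.resolve_right hlarge.ne'
  · intro l
    have hl := (sum_eq_zero_iff_of_nonneg fun l _ => hnonneg l).1 hzero l (mem_univ l)
    rcases mul_eq_zero.1 hl with h | h <;> omega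

theorem lt_card_full_secants {q : ℕ} (hq : 4 < q) (hn : order P L = q ^ 2) {B : Finset P}
    (hle : ∀ l : L, secantCard B l ≤ q + 1) (hne : ∀ l : L, secantCard B l ≠ q)
    (hcard : q ^ 3 + 1 ≤ #B + q) {x : P} (hx : x ∈ B) :
    q + 1 < #{l ∈ linesThrough L x | secantCard B l = q + 1} := by
  obtain ⟨a, rfl⟩ : ∃ a, q = a + 1 := ⟨q - 1, by omega⟩
  have hterm (l : L) : secantCard B l ≤ a + if secantCard B l = a + 1 + 1 then 2 else 0 := by
    have := hle l
    have := hne l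
    split_ifs <;> omega
  have hsum := sum_le_sum fun l (_ : l ∈ linesThrough L x) => hterm l
  rw [sum_linesThrough_secantCard_of_mem hx, sum_add_distrib, sum_const, card_linesThrough,
    ← sum_filter, sum_const, hn, smul_eq_mul, smul_eq_mul] at hsum
  nlinarith

theorem SecantBound.card_ge {q : ℕ} (hq : 4 < q) (hn : order P L = q ^ 2) {B : Finset P}
    (hB : SecantBound L B) (hne : ∀ l : L, secantCard B l ≠ q)
    (hpos : ∀ l : L, 0 < secantCard B l) (hle : ∀ l : L, secantCard B l ≤ q + 1) :
    q ^ 3 + 1 ≤ #B := by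
  classical
  have hqn : q + 1 ≤ q ^ 2 := by nlinarith
  obtain ⟨x₀, hx₀⟩ : B.Nonempty := by
    obtain ⟨-, -, -, l₁, -⟩ := ‹ProjectivePlane P L›.exists_config
    obtain ⟨x, hx, -⟩ := secantCard_pos_iff.1 (hpos l₁)
    exact ⟨x, hx⟩
  obtain ⟨m, -, hm_ge⟩ := hB.exists_le_secantCard hn hx₀
  have hm_eq : secantCard B m = q + 1 := le_antisymm (hle m) hm_ge
  obtain ⟨y, hym, hyB⟩ : ∃ y ∈ m, y ∉ B := exists_mem_line_notMem (by omega)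
  obtain ⟨m', hym', hne'⟩ := exists_mem_line_ne y m
  have hcard : q ^ 3 + 1 ≤ #B + q := by
    have := hB.card_ge_of_secantCard_eq hn hyB hym hym' hne'.symm hm_eq
    have := hpos m'
    omega
  obtain ⟨x, hxB, hxm⟩ : ∃ x ∈ B, x ∉ m := by
    by_contra! hc
    rw [secantCard, filter_true_of_mem hc] at hm_eq
    nlinarith
  obtain ⟨l, hl, z, hzl, hzm, hzB⟩ := exists_mem_line_inter_notMem hxm
    (fun l hl => mem_linesThrough.1 (mem_filter.1 hl).1)
    (hm_eq.trans_lt (lt_card_full_secants hq hn hle hne hcard hxB))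
  obtain ⟨hlx, hl_eq⟩ := mem_filter.1 hl
  have hml : m ≠ l := by
    rintro rfl
    exact hxm (mem_linesThrough.1 hlx)
  have := hB.card_ge_of_secantCard_eq hn hzB hzm hzl hml hm_eq
  omega

end Unital

section LongSecants

variable {P L : Type*} [Finite P] [Finite L] [Membership P L] [ProjectivePlane P L]

theorem SecantBound.exists_lt_secantCard [DecidableEq P] {q : ℕ} (hq : 4 < q)
    (hn : order P L = q ^ 2) {B : Finset P} (hB : SecantBound L B)
    (hne : ∀ l : L, secantCard B l ≠ q) {l₀ : L} (hl₀ : q ^ 2 ≤ secantCard B l₀ + q + 1)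
    (hB₀ : SecantBound L (symmDiff B (pointsOn P l₀))) {x : P} (hx : x ∈ B) :
    ∃ l : L, x ∈ l ∧ q + 1 < secantCard B l := by
  classical
  by_contra! hshort
  have hqn : 5 * q ≤ q ^ 2 := by nlinarith
  have hxl₀ : x ∉ l₀ := fun h => by
    have := hshort l₀ h
    omega
  have hcard : #B + q ^ 2 ≤ (q ^ 2 + 1) * (q + 1) := hn ▸ card_add_order_le hx hshort
  obtain ⟨l, hxl, hl⟩ := hB₀.exists_le_secantCard hn
    (mem_symmDiff.2 (Or.inl ⟨hx, mt mem_pointsOn.1 hxl₀⟩))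
  have hll₀ : l ≠ l₀ := fun h => hxl₀ (h ▸ hxl)
  obtain ⟨y, ⟨hyl, hyl₀⟩, hy⟩ := HasPoints.existsUnique_point P L l l₀ hll₀
  have hle := hshort l hxl
  by_cases hyB : y ∈ B
  · have hsub : {z ∈ symmDiff B (pointsOn P l₀) | z ∈ l} ⊆ ({z ∈ B | z ∈ l}).erase y := by
      intro z hz
      have := hy z
      grind [mem_pointsOn, Finset.mem_symmDiff]
    have := card_le_card hsub
    have := card_erase_add_one (mem_filter.2 ⟨hyB, hyl⟩ : y ∈ {z ∈ B | z ∈ l})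
    simp only [secantCard] at *
    omega
  · have hsub : {z ∈ symmDiff B (pointsOn P l₀) | z ∈ l} ⊆ insert y {z ∈ B | z ∈ l} := by
      intro z hz
      have := hy z
      grind [mem_pointsOn, Finset.mem_symmDiff]
    have := (card_le_card hsub).trans (card_insert_le _ _)
    have hl_eq : secantCard B l = q + 1 := by
      have := hne l
      simp only [secantCard] at *
      omega
    have := hB.card_ge_of_secantCard_eq hn hyB hyl hyl₀ hll₀ hl_eq
    nlinarith

end LongSecants

section LineMultiplicity

variable {P L : Type*} [Finite P] [Membership P L] [ProjectivePlane P L]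

theorem sum_lineMult_pointsOn_of_notMem {S : Finset L} {l : L} (hl : l ∉ S) :
    ∑ x ∈ pointsOn P l, lineMult S x = #S := by
  rw [sum_lineMult, card_eq_sum_ones]
  exact sum_congr rfl fun m hm => secantCard_pointsOn_of_ne (ne_of_mem_of_not_mem hm hl).symm

theorem card_lineMult_pos_le {S : Finset L} {l : L} (hl : l ∉ S) :
    #{x ∈ pointsOn P l | 0 < lineMult S x} ≤ #S := by
  rw [← sum_lineMult_pointsOn_of_notMem (P := P) hl, card_filter]
  exact sum_le_sum fun x _ => by split_ifs <;> omega

theorem card_two_le_lineMult_lt {S : Finset L} {l : L} (hl : l ∈ S) :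
    #{x ∈ pointsOn P l | 2 ≤ lineMult S x} < #S := by
  classical
  have hsub : {x ∈ pointsOn P l | 2 ≤ lineMult S x} ⊆
      {x ∈ pointsOn P l | 0 < lineMult (S.erase l) x} := by
    intro x hx
    obtain ⟨hxl, hx2⟩ := mem_filter.1 hx
    have := lineMult_erase_add_one hl (mem_pointsOn.1 hxl)
    exact mem_filter.2 ⟨hxl, by omega⟩
  have := card_lineMult_pos_le (P := P) (notMem_erase l S)
  have := card_le_card hsub
  have := card_erase_add_one hl
  omega

theorem sum_secantCard_le (B : Finset P) (J : Finset L) :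
    ∑ l ∈ J, secantCard B l ≤ #B + (#J).choose 2 := by
  classical
  suffices h : ∑ l ∈ J, secantCard B l ≤ #{x ∈ B | 0 < lineMult J x} + (#J).choose 2 from
    h.trans (Nat.add_le_add_right (card_filter_le _ _) _)
  induction J using Finset.induction_on with
  | empty => simp
  | insert l J hl ih =>
    have hunion : {x ∈ B | x ∈ l} ∪ {x ∈ B | 0 < lineMult J x} ⊆
        {x ∈ B | 0 < lineMult (insert l J) x} := by
      intro x
      simp only [mem_union, mem_filter, lineMult_pos_iff, exists_mem_insert]
      tauto
    have hinter : {x ∈ B | x ∈ l} ∩ {x ∈ B | 0 < lineMult J x} ⊆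
        {x ∈ pointsOn P l | 0 < lineMult J x} := by
      intro x
      simp only [mem_inter, mem_filter, mem_pointsOn]
      tauto
    have hchoose : (#J + 1).choose 2 = #J + (#J).choose 2 := by
      rw [Nat.choose_succ_succ' (#J) 1, Nat.choose_one_right]
    have := card_union_add_card_inter {x ∈ B | x ∈ l} {x ∈ B | 0 < lineMult J x}
    have := card_le_card hunion
    have := (card_le_card hinter).trans (card_lineMult_pos_le hl)
    rw [sum_insert hl, card_insert_of_notMem hl, hchoose, secantCard]
    omega

theorem card_lt_of_le_secantCard {B : Finset P} {S : Finset L} {a k : ℕ}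
    (hS : ∀ l ∈ S, a ≤ secantCard B l) (hk : #B + k.choose 2 < k * a) : #S < k := by
  by_contra! hc
  obtain ⟨J, hJS, rfl⟩ := exists_subset_card_eq hc
  have hJ : #J • a ≤ ∑ l ∈ J, secantCard B l := card_nsmul_le_sum _ _ _ fun l hl => hS l (hJS hl)
  have := sum_secantCard_le B J
  rw [smul_eq_mul] at hJ
  omega

variable [Finite L]

theorem sum_lineMult_pointsOn_of_mem {S : Finset L} {l : L} (hl : l ∈ S) :
    ∑ x ∈ pointsOn P l, lineMult S x = #S + order P L := by
  classical
  have hne : ∑ m ∈ S.erase l, secantCard (pointsOn P l) m = #(S.erase l) := by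
    rw [card_eq_sum_ones]
    exact sum_congr rfl fun m hm => secantCard_pointsOn_of_ne (ne_of_mem_erase hm).symm
  rw [sum_lineMult, ← add_sum_erase _ _ hl, secantCard_pointsOn_self, hne, ← card_erase_add_one hl]
  ring

theorem card_pointsOn_notMem_add [DecidableEq P] (B : Finset P) (l : L) :
    #{x ∈ pointsOn P l | x ∉ B} + secantCard B l = order P L + 1 := by
  classical
  have : {x ∈ B | x ∈ l} = {x ∈ pointsOn P l | x ∈ B} := by
    ext
    simp [and_comm]
  rw [← card_pointsOn l, secantCard, this, add_comm, card_filter_add_card_filter_not]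

theorem order_add_two_le {S : Finset L} {l : L} (hl : l ∈ S) :
    order P L + 2 ≤ #{x ∈ pointsOn P l | lineMult S x = 1} + #S := by
  have hpos (x : P) (hx : x ∈ pointsOn P l) : 0 < lineMult S x :=
    lineMult_pos_iff.2 ⟨l, hl, mem_pointsOn.1 hx⟩
  have hnot : #{x ∈ pointsOn P l | ¬lineMult S x = 1} = #{x ∈ pointsOn P l | 2 ≤ lineMult S x} := by
    congr 1
    refine filter_congr fun x hx => ?_
    have := hpos x hx
    omega
  have := card_filter_add_card_filter_not (s := pointsOn P l) (fun x => lineMult S x = 1)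
  have := card_two_le_lineMult_lt (P := P) hl
  have := card_pointsOn (P := P) l
  omega

theorem card_mul_le {B : Finset P} {S : Finset L} (hB : ∀ x, lineMult S x = 1 → x ∈ B) :
    #S * (order P L + 2 - #S) ≤ #B := by
  classical
  have hsecant (l : L) (hl : l ∈ S) :
      order P L + 2 - #S ≤ secantCard {x ∈ B | lineMult S x = 1} l := by
    have hsub : {x ∈ pointsOn P l | lineMult S x = 1} ⊆
        {x ∈ {x ∈ B | lineMult S x = 1} | x ∈ l} := by
      intro x
      simp only [mem_filter, mem_pointsOn]
      exact fun h => ⟨⟨hB x h.2, h.2⟩, h.1⟩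
    have := card_le_card hsub
    have := order_add_two_le (P := P) hl
    rw [secantCard]
    omega
  calc #S * (order P L + 2 - #S)
      ≤ ∑ l ∈ S, secantCard {x ∈ B | lineMult S x = 1} l := card_nsmul_le_sum _ _ _ hsecant
    _ = ∑ x ∈ B with lineMult S x = 1, 1 := by
      rw [← sum_lineMult]
      exact sum_congr rfl fun x hx => (mem_filter.1 hx).2
    _ ≤ #B := by
      rw [← card_eq_sum_ones]
      exact card_filter_le _ _

end LineMultiplicity

section ExcessPoints

variable {P L : Type*} [Finite P] [Finite L] [Membership P L] [ProjectivePlane P L]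
  {q : ℕ} {B D : Finset P} {S : Finset L}

theorem two_mul_card_le (hn : order P L = q ^ 2)
    (hS : ∀ l ∈ S, q ^ 2 ≤ secantCard B l + q + 1) (hD : ∀ x ∈ D, 0 < lineMult S x)
    (hDB : ∀ x ∈ D, x ∈ B → 2 ≤ lineMult S x) :
    2 * #D ≤ 2 * (#S * (q + 2)) + #S * (#S - 1) := by
  classical
  have hout : #{x ∈ D | x ∉ B} ≤ #S * (q + 2) := by
    calc #{x ∈ D | x ∉ B} ≤ ∑ x ∈ D with x ∉ B, lineMult S x := by
          rw [card_eq_sum_ones]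
          exact sum_le_sum fun x hx => hD x (mem_filter.1 hx).1
      _ = ∑ l ∈ S, secantCard {x ∈ D | x ∉ B} l := sum_lineMult _ _
      _ ≤ #S * (q + 2) := sum_le_card_nsmul _ _ _ fun l hl => by
          have hsub : {x ∈ {x ∈ D | x ∉ B} | x ∈ l} ⊆ {x ∈ pointsOn P l | x ∉ B} := by
            intro x
            simp only [mem_filter, mem_pointsOn]
            tauto
          have := card_le_card hsub
          have := card_pointsOn_notMem_add B l
          have := hS l hl
          rw [secantCard]
          omega
  have hin : 2 * #{x ∈ D | x ∈ B} ≤ #S * (#S - 1) := by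
    calc 2 * #{x ∈ D | x ∈ B} = ∑ x ∈ D with x ∈ B, 2 := by
          rw [sum_const, smul_eq_mul, mul_comm]
      _ ≤ ∑ x ∈ D with x ∈ B, lineMult S x :=
          sum_le_sum fun x hx => hDB x (mem_filter.1 hx).1 (mem_filter.1 hx).2
      _ = ∑ l ∈ S, secantCard {x ∈ D | x ∈ B} l := sum_lineMult _ _
      _ ≤ #S * (#S - 1) := sum_le_card_nsmul _ _ _ fun l hl => by
          have hsub : {x ∈ {x ∈ D | x ∈ B} | x ∈ l} ⊆
              {x ∈ pointsOn P l | 2 ≤ lineMult S x} := by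
            intro x
            simp only [mem_filter, mem_pointsOn]
            exact fun h => ⟨h.2, hDB x h.1.1 h.1.2⟩
          have := card_le_card hsub
          have := card_two_le_lineMult_lt (P := P) hl
          rw [secantCard]
          omega
  have := card_filter_add_card_filter_not (s := D) (fun x => x ∈ B)
  omega

theorem secantCard_add_le (hq : 4 < q) (hn : order P L = q ^ 2)
    (hS : ∀ l ∈ S, q ^ 2 ≤ secantCard B l + q + 1) (hcard : #S ≤ q + 5)
    (hD : ∀ x ∈ D, 0 < lineMult S x) (hDB : ∀ x ∈ D, x ∈ B → 2 ≤ lineMult S x) (l : L) :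
    secantCard D l + q ≤ q ^ 2 := by
  classical
  have hqn : 5 * q ≤ q ^ 2 := by nlinarith
  by_cases hl : l ∈ S
  · have hsub : {x ∈ D | x ∈ l} ⊆
        {x ∈ pointsOn P l | x ∉ B} ∪ {x ∈ pointsOn P l | 2 ≤ lineMult S x} := by
      intro x
      simp only [mem_union, mem_filter, mem_pointsOn]
      have := hDB x
      tauto
    have := (card_le_card hsub).trans (card_union_le _ _)
    have := card_two_le_lineMult_lt (P := P) hl
    have := card_pointsOn_notMem_add B l
    have := hS l hl
    rw [secantCard]
    omega
  · have hsub : {x ∈ D | x ∈ l} ⊆ {x ∈ pointsOn P l | 0 < lineMult S x} := by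
      intro x
      simp only [mem_filter, mem_pointsOn]
      exact fun h => ⟨h.2, hD x h.1⟩
    have := (card_le_card hsub).trans (card_lineMult_pos_le hl)
    rw [secantCard]
    omega

theorem SecantBound.eq_empty (hq : 4 < q) (hn : order P L = q ^ 2)
    (hS : ∀ l ∈ S, q ^ 2 ≤ secantCard B l + q + 1) (hcard : #S ≤ q + 5)
    (hD : ∀ x ∈ D, 0 < lineMult S x) (hDB : ∀ x ∈ D, x ∈ B → 2 ≤ lineMult S x)
    (hbound : SecantBound L D) : D = ∅ := by
  by_contra hne
  have hlower := hbound.card_ge_of_short hn (nonempty_iff_ne_empty.2 hne)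
    (secantCard_add_le hq hn hS hcard hD hDB)
  have hupper := two_mul_card_le hn hS hD hDB
  have hout : #S * (q + 2) ≤ (q + 5) * (q + 2) := Nat.mul_le_mul_right _ hcard
  have hin : #S * (#S - 1) ≤ (q + 5) * (q + 4) := Nat.mul_le_mul hcard (by omega)
  have hsub : q ^ 2 - q = q * (q - 1) := by rw [sq, Nat.mul_sub_one]
  obtain ⟨t, rfl⟩ : ∃ t, q = t + 5 := ⟨q - 5, by omega⟩
  rw [hsub, Nat.add_sub_assoc (by norm_num) t] at hlower
  nlinarith

end ExcessPoints

section LineSums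

variable {P L K : Type*} [Finite P] [Field K]

/-- The support of a codeword whose coordinates are indexed by a finite set of points. -/
noncomputable def codeSupport (c : P → K) : Finset P :=
  (Set.toFinite (Function.support c)).toFinset

@[simp]
theorem mem_codeSupport {c : P → K} {x : P} : x ∈ codeSupport c ↔ c x ≠ 0 := by
  simp [codeSupport]

theorem codeSupport_indicator_one (B : Finset P) :
    codeSupport ((B : Set P).indicator (1 : P → K)) = B := by
  ext
  simp

variable [Membership P L]

theorem codeSupport_indicator_sub_indicator [DecidableEq P] (A B : Finset P) :
    codeSupport ((A : Set P).indicator (1 : P → K) - (B : Set P).indicator 1) = symmDiff A B := by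
  ext x
  by_cases hA : x ∈ A <;> by_cases hB : x ∈ B <;> simp [mem_symmDiff, hA, hB]

variable {B : Finset P} {S : Finset L}

theorem mem_of_indicator_eq_sum
    (hsum : (B : Set P).indicator (1 : P → K) = ∑ l ∈ S, (pointsOn P l : Set P).indicator 1)
    {x : P} (hx : lineMult S x = 1) : x ∈ B := by
  by_contra hxB
  have h := sum_indicator_pointsOn_apply (R := K) S x
  rw [← hsum, hx, Set.indicator_of_notMem (mt mem_coe.1 hxB), Nat.cast_one] at h
  exact zero_ne_one h

variable [ProjectivePlane P L] {q : ℕ}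

theorem long_secant_arith {a : ℕ} (hq : 4 < q) (hq6 : q ≠ 6) (ha : q ^ 2 ≤ a + q + 1)
    (ha5 : q = 5 → 21 ≤ a) : q ^ 3 + 2 * q ^ 2 + (q + 6).choose 2 < (q + 6) * a := by
  have hchoose : 2 * (q + 6).choose 2 = (q + 6) * (q + 5) := by
    rw [Nat.choose_two_right, Nat.mul_div_cancel' (even_iff_two_dvd.1 (Nat.even_mul_pred_self _))]
    rfl
  rcases (by omega : q = 5 ∨ 7 ≤ q) with rfl | h7
  · have := ha5 rfl
    omega
  · obtain ⟨t, rfl⟩ := Nat.exists_eq_add_of_le h7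
    nlinarith

theorem ne_six_of_isPrimePow (hq : IsPrimePow q) : q ≠ 6 := by
  rintro rfl
  obtain ⟨p, -, huniq⟩ := isPrimePow_iff_unique_prime_dvd.1 hq
  have h2 := huniq 2 ⟨Nat.prime_two, by norm_num⟩
  have h3 := huniq 3 ⟨Nat.prime_three, by norm_num⟩
  omega

theorem card_longSecants_le (hq : 4 < q) (hqpp : IsPrimePow q) (hqK : (q : K) = 0)
    (hmod : ∀ l : L, (secantCard B l : K) = 1) (hS : ∀ l ∈ S, q ^ 2 ≤ secantCard B l + q + 1)
    (hB : #B ≤ q ^ 3 + 2 * q ^ 2) : #S ≤ q + 5 := by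
  by_contra! hlt
  -- For `q = 5` the bound `q ^ 2 - q - 1 = 19` is too weak, but `19` and `20` are not `1` mod `5`.
  set a := if q = 5 then 21 else q ^ 2 - q - 1 with ha
  have hsecant (l : L) (hl : l ∈ S) : a ≤ secantCard B l := by
    have hlong := hS l hl
    have h1 := hmod l
    split_ifs at ha with h5
    · have h19 : secantCard B l ≠ 19 := fun h => by
        rw [h5] at hqK
        rw [h] at h1
        push_cast at hqK h1
        exact one_ne_zero (α := K) (by linear_combination 2 * h1 - 7 * hqK)
      have h20 : secantCard B l ≠ 20 := fun h => by
        rw [h5] at hqK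
        rw [h] at h1
        push_cast at hqK h1
        exact one_ne_zero (α := K) (by linear_combination 4 * hqK - h1)
      rw [h5] at hlong
      omega
    · omega
  have harith := long_secant_arith (a := a) hq (ne_six_of_isPrimePow hqpp)
    (by split_ifs at ha with h5
        · simp [h5, ha]
        · omega)
    (fun h5 => by simp [ha, h5])
  have := card_lt_of_le_secantCard hsecant (lt_of_le_of_lt (Nat.add_le_add_right hB _) harith)
  omega

variable [Finite L]

theorem indicator_eq_sum_of_secantBound (hq : 4 < q) (hn : order P L = q ^ 2)
    (hS : ∀ l ∈ S, q ^ 2 ≤ secantCard B l + q + 1) (hcard : #S ≤ q + 5)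
    (hcover : ∀ x ∈ B, 0 < lineMult S x)
    (hbound : SecantBound L (codeSupport
      ((B : Set P).indicator (1 : P → K) - ∑ l ∈ S, (pointsOn P l : Set P).indicator 1))) :
    (B : Set P).indicator (1 : P → K) = ∑ l ∈ S, (pointsOn P l : Set P).indicator 1 := by
  have hval (x : P) : x ∈ codeSupport
      ((B : Set P).indicator (1 : P → K) - ∑ l ∈ S, (pointsOn P l : Set P).indicator 1) ↔
      (B : Set P).indicator (1 : P → K) x ≠ lineMult S x := by
    rw [mem_codeSupport, Pi.sub_apply, sum_indicator_pointsOn_apply, sub_ne_zero]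
  have hempty := hbound.eq_empty hq hn hS hcard
    (fun x hx => by
      rw [hval] at hx
      by_contra! h0
      have hxB : x ∉ B := fun h => (hcover x h).not_ge h0
      simp [hxB, Nat.le_zero.1 h0] at hx)
    (fun x hx hxB => by
      rw [hval] at hx
      have := hcover x hxB
      by_contra! h2
      have h1 : lineMult S x = 1 := by omega
      simp [hxB, h1] at hx)
  funext x
  have hx := (hval x).not_left.1 (by simp [hempty])
  rw [hx, sum_indicator_pointsOn_apply]

theorem natCast_secantCard_of_indicator_eq_sum
    (hsum : (B : Set P).indicator (1 : P → K) = ∑ l ∈ S, (pointsOn P l : Set P).indicator 1)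
    {l : L} (hl : l ∈ S) : (secantCard B l : K) = #S + order P L := by
  classical
  calc (secantCard B l : K) = ∑ x ∈ pointsOn P l, (B : Set P).indicator (1 : P → K) x := by
        have : {x ∈ B | x ∈ l} = {x ∈ pointsOn P l | x ∈ B} := by
          ext
          simp [and_comm]
        rw [secantCard, this, card_filter]
        push_cast
        exact sum_congr rfl fun x _ => by simp [Set.indicator_apply]
    _ = ((∑ x ∈ pointsOn P l, lineMult S x : ℕ) : K) := by
        push_cast
        exact sum_congr rfl fun x _ => by rw [hsum, sum_indicator_pointsOn_apply]
    _ = #S + order P L := by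
        rw [sum_lineMult_pointsOn_of_mem hl]
        push_cast
        rfl

theorem card_le_of_lineMult_eq_one (hn : order P L = q ^ 2)
    (hS : ∀ l ∉ S, secantCard B l ≤ q + 1) {x : P} (hx : x ∈ B) (hmult : lineMult S x = 1) :
    #B ≤ q ^ 3 + q ^ 2 + 1 := by
  classical
  obtain ⟨l₁, hl₁⟩ := card_eq_one.1 hmult
  have hmem (l : L) : l ∈ S ∧ x ∈ l ↔ l = l₁ := by
    rw [← mem_singleton, ← hl₁, mem_filter]
  have hpencil : l₁ ∈ linesThrough L x := mem_linesThrough.2 ((hmem l₁).2 rfl).2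
  have hothers : ∑ l ∈ (linesThrough L x).erase l₁, secantCard B l ≤
      #((linesThrough L x).erase l₁) • (q + 1) := by
    refine sum_le_card_nsmul _ _ _ fun l hl => hS l fun hlS => ?_
    obtain ⟨hne, hxl⟩ := mem_erase.1 hl
    exact hne ((hmem l).1 ⟨hlS, mem_linesThrough.1 hxl⟩)
  have hsum := sum_linesThrough_secantCard_of_mem (L := L) hx
  have := secantCard_le_order_add_one B l₁
  rw [card_erase_of_mem hpencil, card_linesThrough, hn, smul_eq_mul,
    Nat.add_sub_cancel] at hothers
  rw [← add_sum_erase _ _ hpencil] at hsum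
  rw [hn] at hsum this
  nlinarith

theorem card_le_of_indicator_eq_sum (hq : 4 < q) (hn : order P L = q ^ 2) (hqK : (q : K) = 0)
    (hmod : ∀ l : L, (secantCard B l : K) = 1) (hS : ∀ l ∉ S, secantCard B l ≤ q + 1)
    (hcard : #S ≤ q + 5)
    (hsum : (B : Set P).indicator (1 : P → K) = ∑ l ∈ S, (pointsOn P l : Set P).indicator 1) :
    #S ≤ q + 1 := by
  obtain rfl | ⟨l, hl⟩ := S.eq_empty_or_nonempty
  · simp
  have hqn : 5 * q ≤ q ^ 2 := by nlinarith
  have hlower := card_mul_le fun x => mem_of_indicator_eq_sum hsum (x := x)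
  obtain ⟨x, hx⟩ : {x ∈ pointsOn P l | lineMult S x = 1}.Nonempty := by
    have := order_add_two_le (P := P) hl
    exact card_pos.1 (by omega)
  have hx1 := (mem_filter.1 hx).2
  have hupper := card_le_of_lineMult_eq_one hn hS (mem_of_indicator_eq_sum hsum hx1) hx1
  have hne : #S ≠ q + 2 := by
    intro h
    have := natCast_secantCard_of_indicator_eq_sum hsum hl
    rw [hmod, h, hn] at this
    push_cast at this
    rw [hqK] at this
    exact one_ne_zero (α := K) (by linear_combination -this)
  by_contra! hlt
  rw [hn] at hlower
  obtain ⟨t, rfl⟩ : ∃ t, q = t + 5 := ⟨q - 5, by omega⟩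
  obtain ⟨d, hd⟩ : ∃ d, d + #S = (t + 5) ^ 2 + 2 := ⟨(t + 5) ^ 2 + 2 - #S, by omega⟩
  rw [← hd, Nat.add_sub_cancel] at hlower
  have hcases : #S = t + 8 ∨ #S = t + 9 ∨ #S = t + 10 := by omega
  rcases hcases with h | h | h <;> rw [h] at hlower hd <;> nlinarith

theorem unital_or_sum_of_lines (hq : 4 < q) (hqpp : IsPrimePow q) (hqK : (q : K) = 0)
    (hn : order P L = q ^ 2) {C : Submodule K (P → K)}
    (hC : ∀ c ∈ C, SecantBound L (codeSupport c))
    (hline : ∀ l : L, (pointsOn P l : Set P).indicator 1 ∈ C)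
    (hBC : (B : Set P).indicator 1 ∈ C) (hmod : ∀ l : L, (secantCard B l : K) = 1)
    (hgap : ∀ l : L, secantCard B l ≤ q + 1 ∨ q ^ 2 ≤ secantCard B l + q + 1)
    (hB : #B ≤ q ^ 3 + 2 * q ^ 2) :
    (#B = q ^ 3 + 1 ∧ ∀ l : L, secantCard B l = 1 ∨ secantCard B l = q + 1) ∨
      ∃ S : Finset L, #S ≤ q + 1 ∧
        (B : Set P).indicator (1 : P → K) = ∑ l ∈ S, (pointsOn P l : Set P).indicator 1 := by
  classical
  have hBbound : SecantBound L B := by simpa only [codeSupport_indicator_one] using hC _ hBC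
  have hpos (l : L) : 0 < secantCard B l := by
    by_contra! h0
    have := hmod l
    simp [Nat.le_zero.1 h0] at this
  have hne (l : L) : secantCard B l ≠ q := fun h => by
    have := hmod l
    simp [h, hqK] at this
  set S : Finset L := (Set.toFinite {l : L | q ^ 2 ≤ secantCard B l + q + 1}).toFinset with hSdef
  have hlong (l : L) (hl : l ∈ S) : q ^ 2 ≤ secantCard B l + q + 1 := by simpa [hSdef] using hl
  have hshort (l : L) (hl : l ∉ S) : secantCard B l ≤ q + 1 :=
    (hgap l).resolve_right (by simpa [hSdef] using hl)
  obtain hS | ⟨l₀, hl₀⟩ := S.eq_empty_or_nonempty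
  · have hle (l : L) : secantCard B l ≤ q + 1 := hshort l (by simp [hS])
    exact .inl (secantCard_eq_of_card_ge (by omega) hn (hBbound.card_ge hq hn hne hpos hle)
      hpos hle)
  · have hcover (x : P) (hx : x ∈ B) : 0 < lineMult S x := by
      obtain ⟨l, hxl, hl⟩ := hBbound.exists_lt_secantCard hq hn hne (hlong l₀ hl₀)
        (by simpa only [codeSupport_indicator_sub_indicator] using
          hC _ (C.sub_mem hBC (hline l₀))) hx
      exact lineMult_pos_iff.2 ⟨l, by_contra fun h => (hshort l h).not_gt hl, hxl⟩
    have hcard := card_longSecants_le hq hqpp hqK hmod hlong hB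
    have hsum := indicator_eq_sum_of_secantBound hq hn hlong hcard hcover
      (hC _ (C.sub_mem hBC (C.sum_mem fun l _ => hline l)))
    exact .inr ⟨S, card_le_of_indicator_eq_sum hq hn hqK hmod hshort hcard hsum, hsum⟩

end LineSums

end PointSets

/-! ### Codewords of Desarguesian planes -/

open Finset Polynomial

section Hankel

variable {F : Type*} [Field F]

theorem prod_dvd_det_of_forall_dvd {R n : Type*} [CommRing R] [Fintype n] [DecidableEq n]
    {N : Matrix n n R} {d : n → R} (h : ∀ i j, d j ∣ N i j) : ∏ j, d j ∣ N.det := by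
  choose Z hZ using h
  refine ⟨(of Z).det, ?_⟩
  rw [← det_mul_row]
  congr 1
  ext1 i j
  exact hZ i j

theorem pow_dvd_det_of_rank_map_eval_le {n : Type*} [Fintype n] [DecidableEq n]
    (M : Matrix n n F[X]) (x : F) {t : ℕ} (ht : (M.map (eval x)).rank ≤ t) :
    (X - C x) ^ (Fintype.card n - t) ∣ M.det := by
  classical
  obtain ⟨T, T', D, hD⟩ :=
    Pivot.exists_list_transvec_mul_mul_list_transvec_eq_diagonal (M.map (eval x))
  set A := (T.map TransvectionStruct.toMatrix).prod
  set B := (T'.map TransvectionStruct.toMatrix).prod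
  have hA : A.det = 1 := TransvectionStruct.det_toMatrix_prod T
  have hB : B.det = 1 := TransvectionStruct.det_toMatrix_prod T'
  have hrank : #{j | D j ≠ 0} ≤ t := by
    have hle : (A * M.map (eval x) * B).rank ≤ t :=
      (rank_mul_le_left _ _).trans ((rank_mul_le_right _ _).trans ht)
    rwa [hD, rank_diagonal, Fintype.card_subtype] at hle
  set N := A.map C * M * B.map C with hN
  have hdet : N.det = M.det := by
    have hC (Z : Matrix n n F) : (Z.map C).det = C Z.det := (RingHom.map_det C Z).symm
    rw [hN, det_mul, det_mul, hC, hC, hA, hB, map_one, one_mul, mul_one]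
  have hNx : N.map (eval x) = diagonal D := by
    have hC (Z : Matrix n n F) : (Z.map C).map (evalRingHom x) = Z := by ext; simp
    rw [← hD, hN]
    change (A.map C * M * B.map C).map (evalRingHom x) = _
    rw [Matrix.map_mul, Matrix.map_mul, hC, hC]
    rfl
  have hcolumn (i j : n) : (if D j = 0 then X - C x else 1) ∣ N i j := by
    split_ifs with hj
    · have hij : eval x (N i j) = diagonal D i j := congrFun (congrFun hNx i) j
      rw [dvd_iff_isRoot, IsRoot, hij, diagonal_apply]
      split_ifs with h
      · rw [h, hj]
      · rfl
    · exact one_dvd _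
  have hcard := card_filter_add_card_filter_not (s := (univ : Finset n)) (fun j => D j = 0)
  rw [card_univ] at hcard
  calc (X - C x) ^ (Fintype.card n - t) ∣ (X - C x) ^ #{j | D j = 0} :=
        pow_dvd_pow _ (by simp only [ne_eq] at hrank; omega)
    _ = ∏ j, if D j = 0 then X - C x else 1 := by
        rw [prod_ite, prod_const, prod_const_one, mul_one]
    _ ∣ M.det := hdet ▸ prod_dvd_det_of_forall_dvd hcolumn

/-- The Hankel matrix of size `s` of a sequence. -/
def hankelMatrix {R : Type*} (s : ℕ) (a : ℕ → R) : Matrix (Fin s) (Fin s) R :=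
  of fun i j => a (i + j)

theorem natDegree_det_hankelMatrix_le {P : ℕ → F[X]} (hP : ∀ j, (P j).natDegree ≤ j) (s : ℕ) :
    (hankelMatrix s P).det.natDegree ≤ s * (s - 1) := by
  rw [det_apply]
  refine natDegree_sum_le_of_forall_le _ _ fun σ _ => (natDegree_smul_le _ _).trans ?_
  calc (∏ i, hankelMatrix s P (σ i) i).natDegree
      ≤ ∑ i, (hankelMatrix s P (σ i) i).natDegree := natDegree_prod_le _ _
    _ ≤ ∑ i, ((σ i : ℕ) + i) := sum_le_sum fun i _ => hP _
    _ = s * (s - 1) := by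
      rw [sum_add_distrib, Equiv.sum_comp σ (fun i : Fin s => (i : ℕ)),
        Fin.sum_univ_eq_sum_range (fun i => i) s, ← two_mul, mul_comm, sum_range_id_mul_two]

theorem hankelMatrix_sum_mul_pow {ι : Type*} [Fintype ι] [DecidableEq ι] (s : ℕ) (w v : ι → F) :
    hankelMatrix s (fun j => ∑ i, w i * v i ^ j) =
      (of fun (i : ι) (j : Fin s) => v i ^ (j : ℕ))ᵀ * diagonal w *
        of fun (i : ι) (j : Fin s) => v i ^ (j : ℕ) := by
  ext i j
  rw [mul_apply, hankelMatrix, of_apply]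
  refine sum_congr rfl fun k _ => ?_
  rw [mul_diagonal, transpose_apply, of_apply, of_apply, pow_add]
  ring

theorem rank_hankelMatrix_sum_mul_pow_le {ι : Type*} [Fintype ι] (s : ℕ) (w v : ι → F) :
    (hankelMatrix s fun j => ∑ i, w i * v i ^ j).rank ≤ Fintype.card ι := by
  classical
  rw [hankelMatrix_sum_mul_pow]
  exact (rank_mul_le_right _ _).trans (rank_le_card_height _)

theorem det_hankelMatrix_sum_mul_pow_ne_zero {s : ℕ} {w v : Fin s → F} (hw : ∀ i, w i ≠ 0)
    (hv : Function.Injective v) : (hankelMatrix s fun j => ∑ i, w i * v i ^ j).det ≠ 0 := by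
  have hvand : (vandermonde v).det ≠ 0 := det_vandermonde_ne_zero_iff.2 hv
  rw [hankelMatrix_sum_mul_pow, det_mul, det_mul, det_transpose, det_diagonal]
  exact mul_ne_zero (mul_ne_zero hvand (prod_ne_zero_iff.2 fun i _ => hw i)) hvand

open scoped Classical in
theorem sum_mul_pow_eq_sum_subtype [Fintype F] (c : F → F) (j : ℕ) :
    ∑ y, c y * y ^ j = ∑ y : {y // c y ≠ 0}, c y * (y : F) ^ j := by
  rw [← sum_subtype {y | c y ≠ 0} (fun y => by simp) fun y => c y * y ^ j]
  exact (sum_filter_of_ne fun y _ => left_ne_zero_of_mul).symm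

open scoped Classical in
theorem sum_card_sub_card_le_of_powerSums [Fintype F] {c : F → F → F} {P : ℕ → F[X]}
    (hP : ∀ j, (P j).natDegree ≤ j) (heval : ∀ j x, eval x (P j) = ∑ y, c x y * y ^ j) (x₀ : F) :
    ∑ x, (#{y | c x₀ y ≠ 0} - #{y | c x y ≠ 0}) ≤
      #{y | c x₀ y ≠ 0} * (#{y | c x₀ y ≠ 0} - 1) := by
  set s := #{y | c x₀ y ≠ 0}
  have hmap (x : F) : (hankelMatrix s P).map (eval x) =
      hankelMatrix s fun j => ∑ y : {y // c x y ≠ 0}, c x y * (y : F) ^ j := by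
    ext i j
    simp only [hankelMatrix, map_apply, of_apply, heval, sum_mul_pow_eq_sum_subtype]
  have hdet : (hankelMatrix s P).det ≠ 0 := by
    intro h
    let e : Fin s ≃ {y // c x₀ y ≠ 0} :=
      (Fintype.equivFinOfCardEq (Fintype.card_subtype _)).symm
    refine det_hankelMatrix_sum_mul_pow_ne_zero (w := fun i => c x₀ (e i)) (v := fun i => e i)
      (fun i => (e i).2) (Subtype.val_injective.comp e.injective) ?_
    have hx₀ : ((hankelMatrix s P).map (eval x₀)).det = 0 := by
      rw [← coe_evalRingHom, ← RingHom.mapMatrix_apply, ← RingHom.map_det, h, map_zero]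
    rw [hmap] at hx₀
    simpa only [← e.sum_comp] using hx₀
  have hdvd : ∏ x : F, (X - C x) ^ (s - #{y | c x y ≠ 0}) ∣ (hankelMatrix s P).det := by
    refine prod_dvd_of_coprime
      (fun a _ b _ hab => (pairwise_coprime_X_sub_C Function.injective_id hab).pow) fun x _ => ?_
    have hrank := rank_hankelMatrix_sum_mul_pow_le s (fun y : {y // c x y ≠ 0} => c x y) (↑)
    rw [← hmap, Fintype.card_subtype] at hrank
    simpa only [Fintype.card_fin] using pow_dvd_det_of_rank_map_eval_le _ x hrank
  have hdeg := (natDegree_le_of_dvd hdvd hdet).trans (natDegree_det_hankelMatrix_le hP s)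
  rw [natDegree_prod_of_monic _ _ fun x _ => (monic_X_sub_C x).pow _] at hdeg
  simpa only [(monic_X_sub_C _).natDegree_pow, natDegree_X_sub_C, mul_one] using hdeg

end Hankel

open Finset Polynomial

section KernelCode

variable {F W : Type*} [Field F] [AddCommGroup W] [Module F W]

/-- The space of functions on the vectors of `W` spanned by the characteristic functions of the
kernels of linear forms. The zero form is allowed, so that it is stable under pullback. -/
def kernelCode (F W : Type*) [Field F] [AddCommGroup W] [Module F W] : Submodule F (W → F) :=
  Submodule.span F (Set.range fun φ : Dual F W => {v | φ v = 0}.indicator 1)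

theorem indicator_mem_kernelCode (φ : Dual F W) : {v | φ v = 0}.indicator 1 ∈ kernelCode F W :=
  Submodule.subset_span ⟨φ, rfl⟩

theorem kernelCode_smul {f : W → F} (hf : f ∈ kernelCode F W) {a : F} (ha : a ≠ 0) (v : W) :
    f (a • v) = f v := by
  classical
  induction hf using Submodule.span_induction with
  | mem f h =>
    obtain ⟨φ, rfl⟩ := h
    simp [Set.indicator_apply, ha]
  | zero => rfl
  | add f g _ _ hf hg => simp only [Pi.add_apply, hf, hg]
  | smul c f _ hf => simp only [Pi.smul_apply, hf]

variable [Fintype F]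

open scoped Classical in
theorem exists_powerSum_affine_zeros (α β γ : F) (j : ℕ) : ∃ P : F[X], P.natDegree ≤ j ∧
    ∀ x, P.eval x = ∑ y : F, (if γ + x * α + y * β = 0 then 1 else 0) * y ^ j := by
  by_cases hβ : β = 0
  · simp only [hβ, mul_zero, add_zero, ← mul_sum]
    by_cases hj : j < Fintype.card F - 1
    · exact ⟨0, by simp, fun x => by simp [FiniteField.sum_pow_lt_card_sub_one F j hj]⟩
    · refine ⟨C (∑ y : F, y ^ j) * (1 - (C α * X + C γ) ^ (Fintype.card F - 1)), ?_, fun x => ?_⟩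
      · refine (natDegree_C_mul_le _ _).trans ((natDegree_sub_le _ _).trans ?_)
        have := natDegree_pow_le_of_le (Fintype.card F - 1) (natDegree_linear_le (a := α) (b := γ))
        rw [natDegree_one]
        omega
      · have h1 : 1 < Fintype.card F := Fintype.one_lt_card
        simp only [eval_mul, eval_C, eval_sub, eval_one, eval_pow, eval_add, eval_X]
        rw [show γ + x * α = α * x + γ by ring, mul_comm]
        split_ifs with h
        · rw [h, zero_pow (by omega), sub_zero]
        · rw [FiniteField.pow_card_sub_one_eq_one _ h, sub_self]
  · refine ⟨(C (-α / β) * X + C (-γ / β)) ^ j, ?_, fun x => ?_⟩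
    · simpa only [mul_one] using natDegree_pow_le_of_le j natDegree_linear_le
    · have hroot (y : F) : γ + x * α + y * β = 0 ↔ y = -α / β * x + -γ / β := by
        field_simp
        constructor <;> intro h <;> linear_combination h
      simp [hroot]

theorem exists_powerSum_of_mem_kernelCode {f : W → F} (hf : f ∈ kernelCode F W) (u b t : W)
    (j : ℕ) : ∃ P : F[X], P.natDegree ≤ j ∧
      ∀ x, P.eval x = ∑ y : F, f (u + x • b + y • t) * y ^ j := by
  classical
  induction hf using Submodule.span_induction with
  | mem f h =>
    obtain ⟨φ, rfl⟩ := h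
    obtain ⟨P, hP, heval⟩ := exists_powerSum_affine_zeros (φ b) (φ t) (φ u) j
    refine ⟨P, hP, fun x => ?_⟩
    simp only [heval, Set.indicator_apply, Set.mem_ofPred_eq, map_add, map_smul, smul_eq_mul,
      Pi.one_apply]
  | zero => exact ⟨0, by simp, by simp⟩
  | add f g _ _ hf hg =>
    obtain ⟨P, hP, hPeval⟩ := hf
    obtain ⟨R, hR, hReval⟩ := hg
    exact ⟨P + R, (natDegree_add_le _ _).trans (max_le hP hR), fun x => by
      simp only [eval_add, hPeval, hReval, Pi.add_apply, add_mul, sum_add_distrib]⟩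
  | smul c f _ hf =>
    obtain ⟨P, hP, heval⟩ := hf
    exact ⟨C c * P, (natDegree_C_mul_le _ _).trans hP, fun x => by
      simp only [eval_mul, eval_C, heval, Pi.smul_apply, smul_eq_mul, mul_sum, mul_assoc]⟩

open scoped Classical in
/-- The parameters `y` at which `f` does not vanish on the affine line `v + y • t`. -/
noncomputable def fiber (f : W → F) (v t : W) : Finset F :=
  {y | f (v + y • t) ≠ 0}

@[simp]
theorem mem_fiber {f : W → F} {v t : W} {y : F} : y ∈ fiber f v t ↔ f (v + y • t) ≠ 0 := by
  simp [fiber]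

theorem sum_fiber_deficiency_le {f : W → F} (hf : f ∈ kernelCode F W) (u b t : W) :
    ∑ x : F, (#(fiber f u t) - #(fiber f (u + x • b) t)) ≤
      #(fiber f u t) * (#(fiber f u t) - 1) := by
  classical
  choose P hP heval using exists_powerSum_of_mem_kernelCode hf u b t
  simpa [fiber] using sum_card_sub_card_le_of_powerSums hP heval 0

end KernelCode

section Frame

variable {F W : Type*} [Field F] [AddCommGroup W] [Module F W]

theorem linearIndependent_triple_iff {u b t : W} : LinearIndependent F ![u, b, t] ↔
    ∀ x y z : F, x • u + y • b + z • t = 0 → x = 0 ∧ y = 0 ∧ z = 0 := by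
  rw [Fintype.linearIndependent_iff]
  refine ⟨fun h x y z hxyz => ?_, fun h g hg i => ?_⟩
  · have hzero := h ![x, y, z] (by simpa [Fin.sum_univ_three] using hxyz)
    exact ⟨hzero 0, hzero 1, hzero 2⟩
  · obtain ⟨h0, h1, h2⟩ := h (g 0) (g 1) (g 2) (by simpa [Fin.sum_univ_three] using hg)
    fin_cases i <;> assumption

theorem linearIndependent_pair_add_smul {u b t : W} (h : LinearIndependent F ![u, b, t]) (x : F) :
    LinearIndependent F ![u + x • b, t] := by
  rw [linearIndependent_triple_iff] at h
  refine LinearIndependent.pair_iff.2 fun r s hrs => ?_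
  obtain ⟨hr, -, hs⟩ := h r (r * x) s (by rw [← hrs]; module)
  exact ⟨hr, hs⟩

theorem linearIndependent_tail {u b t : W} (h : LinearIndependent F ![u, b, t]) :
    LinearIndependent F ![b, t] := by
  rw [linearIndependent_triple_iff] at h
  refine LinearIndependent.pair_iff.2 fun r s hrs => ?_
  obtain ⟨-, hr, hs⟩ := h 0 r s (by rw [← hrs]; module)
  exact ⟨hr, hs⟩

theorem linearIndependent_swap_tail {u b t : W} (h : LinearIndependent F ![u, b, t]) :
    LinearIndependent F ![u, t, b] := by
  rw [linearIndependent_triple_iff] at h ⊢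
  intro x y z hsum
  obtain ⟨hx, hz, hy⟩ := h x z y (by rw [← hsum]; module)
  exact ⟨hx, hy, hz⟩

theorem linearIndependent_swap_head {u b t : W} (h : LinearIndependent F ![u, b, t]) :
    LinearIndependent F ![b, u, t] := by
  rw [linearIndependent_triple_iff] at h ⊢
  intro x y z hsum
  obtain ⟨hy, hx, hz⟩ := h y x z (by rw [← hsum]; module)
  exact ⟨hx, hy, hz⟩

end Frame

section PlaneCode

open Finset Configuration Projectivization
open scoped LinearAlgebra.Projectivization

variable {F : Type*} [Field F]

theorem mk_mem_iff {v : Fin 3 → F} (hv : v ≠ 0) {l : ℙ F (Fin 3 → F)} :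
    Projectivization.mk F v hv ∈ l ↔ v ⬝ᵥ l.rep = 0 := by
  rw [ofField.mem_iff, ← orthogonal_mk hv l.rep_nonzero, l.mk_rep]

theorem not_forall_mem_of_linearIndependent {u b t : Fin 3 → F}
    (h : LinearIndependent F ![u, b, t]) (l : ℙ F (Fin 3 → F)) :
    ¬ (u ⬝ᵥ l.rep = 0 ∧ b ⬝ᵥ l.rep = 0 ∧ t ⬝ᵥ l.rep = 0) := by
  rintro ⟨hu, hb, ht⟩
  have hinj : Function.Injective (Matrix.of ![u, b, t]).mulVec :=
    mulVec_injective_iff_isUnit.2 (linearIndependent_rows_iff_isUnit.1 h)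
  refine l.rep_nonzero (hinj ?_)
  ext i
  fin_cases i <;> simpa [mulVec]

/-- The functions on the points of the plane induced by the functions in `kernelCode`, that is,
the code spanned by the characteristic functions of the lines and of the whole plane. -/
noncomputable def planeCode (F : Type*) [Field F] : Submodule F (ℙ F (Fin 3 → F) → F) :=
  (kernelCode F (Fin 3 → F)).map (LinearMap.funLeft F F Projectivization.rep)

theorem apply_rep_mk {W : Type*} [AddCommGroup W] [Module F W] {f : W → F}
    (hf : f ∈ kernelCode F W) {v : W} (hv : v ≠ 0) : f (Projectivization.mk F v hv).rep = f v := by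
  obtain ⟨a, ha⟩ := exists_smul_eq_mk_rep F v hv
  rw [← ha, Units.smul_def, kernelCode_smul hf a.ne_zero]

theorem indicator_pointsOn_mem_planeCode [Finite F] (l : ℙ F (Fin 3 → F)) :
    (pointsOn (ℙ F (Fin 3 → F)) l : Set (ℙ F (Fin 3 → F))).indicator 1 ∈ planeCode F := by
  classical
  refine ⟨_, indicator_mem_kernelCode (dotProductBilin F F l.rep), ?_⟩
  ext x
  have hx := mk_mem_iff x.rep_nonzero (l := l)
  rw [x.mk_rep] at hx
  simp [Set.indicator_apply, hx, dotProduct_comm]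

theorem exists_line_of_linearIndependent {v t : Fin 3 → F} (h : LinearIndependent F ![v, t]) :
    ∃ l : ℙ F (Fin 3 → F), v ⬝ᵥ l.rep = 0 ∧ t ⬝ᵥ l.rep = 0 := by
  classical
  have hv : v ≠ 0 := h.ne_zero 0
  have ht : t ≠ 0 := h.ne_zero 1
  obtain ⟨l, hl⟩ : ∃ l : ℙ F (Fin 3 → F),
      Projectivization.mk F v hv ∈ l ∧ Projectivization.mk F t ht ∈ l := by
    have hne : Projectivization.mk F v hv ≠ Projectivization.mk F t ht := by
      rw [Ne, mk_eq_mk_iff', not_exists]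
      exact (LinearIndependent.pair_iff' ht).1 (LinearIndependent.pair_symm_iff.1 h)
    exact ⟨_, HasLines.mkLine_ax hne⟩
  exact ⟨l, by rwa [mk_mem_iff, mk_mem_iff] at hl⟩

theorem order_eq_card [Finite F] [DecidableEq F] :
    ProjectivePlane.order (ℙ F (Fin 3 → F)) (ℙ F (Fin 3 → F)) = Nat.card F := by
  have := Fintype.ofFinite (ℙ F (Fin 3 → F))
  have hcard := card_of_finrank F (Fin 3 → F) (n := 3) (by simp)
  rw [Nat.card_eq_fintype_card (α := ℙ F (Fin 3 → F)),
    ProjectivePlane.card_points (ℙ F (Fin 3 → F)) (ℙ F (Fin 3 → F))] at hcard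
  simp only [sum_range_succ, sum_range_zero] at hcard
  nlinarith

variable {f : (Fin 3 → F) → F} {t : Fin 3 → F}

theorem secantCard_codeSupport_eq_card_fiber [Fintype F] (hf : f ∈ kernelCode F (Fin 3 → F))
    (hft : f t = 0) {v : Fin 3 → F} (h : LinearIndependent F ![v, t]) {l : ℙ F (Fin 3 → F)}
    (hv : v ⬝ᵥ l.rep = 0) (ht : t ⬝ᵥ l.rep = 0) :
    secantCard (codeSupport (f ∘ Projectivization.rep)) l = #(fiber f v t) := by
  classical
  rw [LinearIndependent.pair_iff] at h
  have ht0 : t ≠ 0 := fun h0 => one_ne_zero (h 0 1 (by simp [h0])).2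
  have hne (y : F) : v + y • t ≠ 0 := fun h0 => one_ne_zero (h 1 y (by simpa using h0)).1
  set g : F → ℙ F (Fin 3 → F) := fun y => Projectivization.mk F _ (hne y)
  have hg : Function.Injective g := by
    intro y z hyz
    obtain ⟨a, ha⟩ := (mk_eq_mk_iff' F _ _ (hne y) (hne z)).1 hyz
    obtain ⟨h1, h2⟩ := h (a - 1) (a * z - y) (by
      rw [← sub_eq_zero] at ha; rw [← ha]; module)
    linear_combination z * h1 - h2
  have htg (y : F) : g y ≠ Projectivization.mk F t ht0 := by
    intro heq
    obtain ⟨a, ha⟩ := (mk_eq_mk_iff' F _ _ (hne y) ht0).1 heq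
    exact one_ne_zero (h 1 (y - a) (by rw [← sub_eq_zero] at ha; rw [← neg_zero, ← ha]; module)).1
  have hpoints : insert (Projectivization.mk F t ht0) (univ.image g) = pointsOn _ l := by
    refine eq_of_subset_of_card_le ?_ ?_
    · simp [insert_subset_iff, image_subset_iff, mk_mem_iff, ht, hv, g]
    · rw [card_pointsOn, order_eq_card, Nat.card_eq_fintype_card,
        card_insert_of_notMem (by simpa using htg), card_image_of_injective _ hg, card_univ]
  rw [secantCard, ← card_image_of_injective _ hg]
  congr 1
  ext x
  rw [mem_filter, mem_codeSupport, ← mem_pointsOn, ← hpoints]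
  simp only [mem_insert, mem_image, mem_univ, true_and, mem_fiber, Function.comp_apply]
  constructor
  · rintro ⟨hx, rfl | ⟨y, rfl⟩⟩
    · exact absurd hft (by rwa [apply_rep_mk hf] at hx)
    · exact ⟨y, by rwa [apply_rep_mk hf] at hx, rfl⟩
  · rintro ⟨y, hy, rfl⟩
    exact ⟨by rwa [apply_rep_mk hf], Or.inr ⟨y, rfl⟩⟩

theorem card_codeSupport_eq_sum_card_fiber [Fintype F] (hf : f ∈ kernelCode F (Fin 3 → F))
    (hft : f t = 0) {u b : Fin 3 → F} (h : LinearIndependent F ![u, b, t]) :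
    #(codeSupport (P := ℙ F (Fin 3 → F)) (f ∘ Projectivization.rep)) =
      #(fiber f b t) + ∑ x : F, #(fiber f (u + x • b) t) := by
  classical
  have ht0 : t ≠ 0 := h.ne_zero 2
  have hbt : LinearIndependent F ![b, t] := linearIndependent_tail h
  obtain ⟨m, hbm, htm⟩ := exists_line_of_linearIndependent hbt
  choose L huL htL using fun x : F =>
      exists_line_of_linearIndependent (linearIndependent_pair_add_smul h x)
  have hbL (x : F) (hb : b ⬝ᵥ (L x).rep = 0) : False := by
    have hu := huL x
    rw [add_dotProduct, smul_dotProduct, hb, smul_zero, add_zero] at hu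
    exact not_forall_mem_of_linearIndependent h (L x) ⟨hu, hb, htL x⟩
  have hL : Function.Injective L := by
    intro x y hxy
    by_contra hne
    have hx := huL x
    have hy := huL y
    rw [← hxy] at hy
    simp only [add_dotProduct, smul_dotProduct, smul_eq_mul] at hx hy
    refine hbL x ((mul_eq_zero.1 ?_).resolve_left (sub_ne_zero.2 hne))
    linear_combination hx - hy
  have hmL : m ∉ univ.image L := by
    simp only [mem_image, mem_univ, true_and, not_exists]
    rintro x rfl
    exact hbL x hbm
  have hlines : insert m (univ.image L) =
      linesThrough (ℙ F (Fin 3 → F)) (Projectivization.mk F t ht0) := by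
    refine eq_of_subset_of_card_le ?_ ?_
    · simp [insert_subset_iff, image_subset_iff, mk_mem_iff, htm, htL]
    · rw [card_linesThrough, order_eq_card, Nat.card_eq_fintype_card,
        card_insert_of_notMem hmL, card_image_of_injective _ hL, card_univ]
  have hT : Projectivization.mk F t ht0 ∉ codeSupport (f ∘ Projectivization.rep) := by
    simp [apply_rep_mk hf, hft]
  rw [← sum_linesThrough_secantCard_of_notMem (L := ℙ F (Fin 3 → F)) hT, ← hlines,
    sum_insert hmL, sum_image hL.injOn,
    secantCard_codeSupport_eq_card_fiber hf hft hbt hbm htm]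
  exact congrArg _ (sum_congr rfl fun x _ =>
    secantCard_codeSupport_eq_card_fiber hf hft (linearIndependent_pair_add_smul h x) (huL x)
      (htL x))

theorem exists_mem_line_notMem_line [Finite F] {l m x : ℙ F (Fin 3 → F)}
    (hxl : x ∈ l) (hxm : x ∈ m) (hlm : l ≠ m) : ∃ y ∈ l, y ∉ m := by
  classical
  obtain ⟨y, hyl, hyx⟩ := (pointsOn (ℙ F (Fin 3 → F)) l).exists_mem_ne
    (by rw [card_pointsOn (L := ℙ F (Fin 3 → F)), order_eq_card]
        simp) x
  rw [mem_pointsOn] at hyl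
  exact ⟨y, hyl, fun hym => (Nondegenerate.eq_or_eq hyl hxl hym hxm).elim hyx hlm⟩

theorem linearIndependent_of_dotProduct {x y z l m : Fin 3 → F} (hx : x ≠ 0)
    (hxl : x ⬝ᵥ l = 0) (hxm : x ⬝ᵥ m = 0) (hyl : y ⬝ᵥ l = 0) (hym : y ⬝ᵥ m ≠ 0)
    (hzl : z ⬝ᵥ l ≠ 0) (hzm : z ⬝ᵥ m = 0) : LinearIndependent F ![y, z, x] := by
  rw [linearIndependent_triple_iff]
  intro α β γ hsum
  have hα := congrArg (· ⬝ᵥ m) hsum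
  have hβ := congrArg (· ⬝ᵥ l) hsum
  simp only [add_dotProduct, smul_dotProduct, zero_dotProduct, hxl, hxm, hyl, hzm, smul_eq_mul,
    mul_zero, add_zero, zero_add, mul_eq_zero, hym, hzl, or_false] at hα hβ
  subst hα hβ
  simpa [hx] using hsum

theorem card_fiber_mul_add_card_fiber_le [Fintype F] (hf : f ∈ kernelCode F (Fin 3 → F))
    (hft : f t = 0) {u b : Fin 3 → F} (h : LinearIndependent F ![u, b, t]) :
    #(fiber f u t) * (Fintype.card F + 1) + #(fiber f b t) ≤
      #(codeSupport (P := ℙ F (Fin 3 → F)) (f ∘ Projectivization.rep)) + #(fiber f u t) ^ 2 := by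
  have hcard := card_codeSupport_eq_sum_card_fiber hf hft h
  have hdeficiency := sum_fiber_deficiency_le hf u b t
  have hsum : Fintype.card F * #(fiber f u t) ≤ ∑ x : F, #(fiber f (u + x • b) t) +
      ∑ x : F, (#(fiber f u t) - #(fiber f (u + x • b) t)) := by
    rw [← sum_add_distrib, ← smul_eq_mul, ← card_univ, ← sum_const]
    exact sum_le_sum fun a _ => le_add_tsub
  have hsq : #(fiber f u t) * (#(fiber f u t) - 1) + #(fiber f u t) = #(fiber f u t) ^ 2 := by
    cases #(fiber f u t) with
    | zero => rfl
    | succ s => rw [Nat.add_sub_cancel]; ring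
  linarith

theorem secantBound_codeSupport_of_mem_planeCode [Finite F] [DecidableEq F]
    {c : ℙ F (Fin 3 → F) → F} (hc : c ∈ planeCode F) :
    SecantBound (ℙ F (Fin 3 → F)) (codeSupport c) := by
  have := Fintype.ofFinite F
  obtain ⟨f, hf, rfl⟩ := hc
  intro x l m hx hxl hxm hlm
  obtain ⟨y, hyl, hym⟩ := exists_mem_line_notMem_line hxl hxm hlm
  obtain ⟨z, hzm, hzl⟩ := exists_mem_line_notMem_line hxm hxl hlm.symm
  have hmem (a l : ℙ F (Fin 3 → F)) : a ∈ l ↔ a.rep ⬝ᵥ l.rep = 0 := by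
    rw [← mk_mem_iff a.rep_nonzero, a.mk_rep]
  rw [hmem] at hxl hxm hyl hym hzm hzl
  have hft : f x.rep = 0 := by simpa using hx
  have h := linearIndependent_of_dotProduct x.rep_nonzero hxl hxm hyl hym hzl hzm
  have hyx : LinearIndependent F ![y.rep, x.rep] := by
    simpa using linearIndependent_pair_add_smul h 0
  rw [show LinearMap.funLeft F F Projectivization.rep f = f ∘ Projectivization.rep from rfl,
    secantCard_codeSupport_eq_card_fiber hf hft hyx hyl hxl,
    secantCard_codeSupport_eq_card_fiber hf hft (linearIndependent_tail h) hzm hxm,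
    order_eq_card, Nat.card_eq_fintype_card]
  exact card_fiber_mul_add_card_fiber_le hf hft h

end PlaneCode

/-! ### Unitals in the code -/

section Concentrated

open Finset Polynomial

variable {F : Type*} [Field F] {n : ℕ} {Y : Finset F} {e : F}

/-- The power sums of `Y` up to exponent `n` are those of a single point `e`. -/
def IsConcentratedAt (n : ℕ) (Y : Finset F) (e : F) : Prop :=
  ∀ j ≤ n, ∑ y ∈ Y, y ^ j = e ^ j

theorem IsConcentratedAt.sum_eval (h : IsConcentratedAt n Y e) {G : F[X]}
    (hG : G.natDegree ≤ n) : ∑ y ∈ Y, G.eval y = G.eval e := by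
  simp only [eval_eq_sum_range' (Nat.lt_succ_of_le hG)]
  rw [sum_comm]
  refine sum_congr rfl fun j hj => ?_
  rw [← mul_sum, h j (Nat.lt_succ_iff.1 (mem_range.1 hj))]

theorem IsConcentratedAt.eq_singleton (h : IsConcentratedAt n Y e) (hn : 0 < n) (hY : #Y = 1) :
    Y = {e} := by
  obtain ⟨y, rfl⟩ := card_eq_one.1 hY
  simpa using h 1 hn

theorem IsConcentratedAt.prod_erase_sub [DecidableEq F] (h : IsConcentratedAt n Y e)
    (hY : #Y ≤ n + 1) {i : F} (hi : i ∈ Y) :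
    ∏ k ∈ Y.erase i, (i - k) = ∏ k ∈ Y.erase i, (e - k) := by
  have hdeg : (∏ k ∈ Y.erase i, (X - C k)).natDegree ≤ n := by
    rw [natDegree_prod_of_monic _ _ fun k _ => monic_X_sub_C k]
    simp only [natDegree_X_sub_C, sum_const, card_erase_of_mem hi, smul_eq_mul]
    omega
  have hsum := h.sum_eval hdeg
  simp only [eval_prod, eval_sub, eval_X, eval_C] at hsum
  rwa [sum_eq_single_of_mem i hi fun y hy hyi =>
    prod_eq_zero (mem_erase.2 ⟨hyi, hy⟩) (sub_self y)] at hsum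

theorem IsConcentratedAt.notMem (h : IsConcentratedAt n Y e) (hn : 0 < n) (hY : #Y = n + 1) :
    e ∉ Y := by
  classical
  intro he
  obtain ⟨i, hi, hie⟩ := Y.exists_mem_ne (by omega) e
  have hprod := h.prod_erase_sub hY.le hi
  rw [prod_eq_zero (f := (e - ·)) (mem_erase.2 ⟨hie.symm, he⟩) (sub_self e),
    prod_eq_zero_iff] at hprod
  obtain ⟨k, hk, hik⟩ := hprod
  exact (mem_erase.1 hk).1 (sub_eq_zero.1 hik).symm

variable [DecidableEq F]

theorem IsConcentratedAt.prod_erase_inv_sub (h : IsConcentratedAt n Y 0) (hn : 0 < n)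
    (hY : #Y = n + 1) {i : F} (hi : i ∈ Y) :
    ∏ k ∈ Y.erase i, (i⁻¹ - k⁻¹) = i⁻¹ ^ n := by
  have hne {y : F} (hy : y ∈ Y) : y ≠ 0 := fun h0 => h.notMem hn hY (h0 ▸ hy)
  have hfactor : ∀ k ∈ Y.erase i, i⁻¹ - k⁻¹ = i⁻¹ * ((i - k) / (0 - k)) := fun k hk => by
    have hi0 := hne hi
    have hk0 := hne (mem_of_mem_erase hk)
    rw [zero_sub]
    field
  rw [prod_congr rfl hfactor, prod_mul_distrib, prod_div_distrib, h.prod_erase_sub hY.le hi,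
    div_self, mul_one, prod_const, card_erase_of_mem hi, hY, Nat.add_sub_cancel]
  exact prod_ne_zero_iff.2 fun k hk => sub_ne_zero.2 (hne (mem_of_mem_erase hk)).symm

theorem IsConcentratedAt.sub_inv_mul_inv_pow (h : IsConcentratedAt n Y 0) (hn : 0 < n)
    (hY : #Y = n + 1) {ε : F} (hinv : IsConcentratedAt n (Y.image (·⁻¹)) ε) {i : F}
    (hi : i ∈ Y) : (ε - i⁻¹) * i⁻¹ ^ n = ∏ k ∈ Y, (ε - k⁻¹) := by
  have himage : (Y.image (·⁻¹)).erase i⁻¹ = (Y.erase i).image (·⁻¹) :=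
    (image_erase inv_injective Y i).symm
  have hprod := hinv.prod_erase_sub (by rw [card_image_of_injective _ inv_injective, hY])
    (mem_image_of_mem _ hi)
  rw [himage, prod_image inv_injective.injOn, prod_image inv_injective.injOn,
    h.prod_erase_inv_sub hn hY hi] at hprod
  rw [hprod, mul_prod_erase Y (fun k => ε - k⁻¹) hi]

end Concentrated

section Norm

open Finset Polynomial

variable {F : Type*} [Field F] [Fintype F] {q : ℕ}

theorem exists_eq_ringChar_pow (hF : Fintype.card F = q ^ 2) : ∃ m, q = ringChar F ^ m := by
  obtain ⟨n, hp, hn⟩ := FiniteField.card F (ringChar F)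
  obtain ⟨m, -, hm⟩ := (Nat.dvd_prime_pow hp).1 (hn ▸ hF ▸ dvd_pow_self q two_ne_zero)
  exact ⟨m, hm⟩

theorem sub_pow_of_card (hF : Fintype.card F = q ^ 2) (a b : F) :
    (a - b) ^ q = a ^ q - b ^ q := by
  have : Fact (ringChar F).Prime := ⟨CharP.char_is_prime F _⟩
  obtain ⟨m, rfl⟩ := exists_eq_ringChar_pow hF
  exact sub_pow_char_pow a b m

theorem natCast_eq_zero_of_card (hF : Fintype.card F = q ^ 2) : (q : F) = 0 := by
  have h := FiniteField.cast_card_eq_zero F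
  rw [hF, Nat.cast_pow] at h
  exact pow_eq_zero_iff two_ne_zero |>.1 h

theorem pow_pow_of_card (hF : Fintype.card F = q ^ 2) (a : F) : (a ^ q) ^ q = a := by
  rw [← pow_mul, ← sq, ← hF, FiniteField.pow_card]

theorem pow_succ_pow_of_card (hF : Fintype.card F = q ^ 2) (a : F) :
    (a ^ (q + 1)) ^ q = a ^ (q + 1) := by
  rw [pow_succ, mul_pow, pow_pow_of_card hF, mul_comm]

variable {Y : Finset F} [DecidableEq F]

theorem IsConcentratedAt.eq_zero_of_image_inv (hF : Fintype.card F = q ^ 2) (hq : 1 < q)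
    (h : IsConcentratedAt q Y 0) (hY : #Y = q + 1) {ε : F}
    (hinv : IsConcentratedAt q (Y.image (·⁻¹)) ε) : ε = 0 := by
  set κ := ∏ k ∈ Y, (ε - k⁻¹)
  have hroot : ∀ i ∈ Y, ε ^ q * i⁻¹ - ε * i⁻¹ ^ q + (κ - κ ^ q) = 0 := by
    intro i hi
    have hκ : (ε - i⁻¹) * i⁻¹ ^ q = κ := h.sub_inv_mul_inv_pow (by omega) hY hinv hi
    have hκq : (ε ^ q - i⁻¹ ^ q) * i⁻¹ = κ ^ q := by
      rw [← hκ, mul_pow, sub_pow_of_card hF, pow_pow_of_card hF]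
    linear_combination hκq - hκ
  have hdeg : (C (ε ^ q) * X - C ε * X ^ q + C (κ - κ ^ q) : F[X]).natDegree ≤ q := by
    compute_degree!
    exact hq.le
  have hzero : (C (ε ^ q) * X - C ε * X ^ q + C (κ - κ ^ q) : F[X]) = 0 := by
    refine eq_zero_of_natDegree_lt_card_of_eval_eq_zero' _ (Y.image (·⁻¹)) ?_ ?_
    · simpa using hroot
    · rw [card_image_of_injective _ inv_injective, hY]
      omega
  have hcoeff := congrArg (coeff · q) hzero
  simpa only [coeff_add, coeff_sub, coeff_C_mul, coeff_X_pow_self, coeff_X_of_ne_one hq.ne',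
    coeff_C_of_ne_zero (show q ≠ 0 by omega), coeff_zero, mul_zero, mul_one, zero_sub, add_zero,
    neg_eq_zero] using hcoeff

theorem IsConcentratedAt.mem_iff_pow_eq (hF : Fintype.card F = q ^ 2) (hq : 1 < q)
    (h : IsConcentratedAt q Y 0) (hY : #Y = q + 1) {ε : F}
    (hinv : IsConcentratedAt q (Y.image (·⁻¹)) ε) (y : F) :
    y ∈ Y ↔ y ^ (q + 1) = ∑ z ∈ Y, z ^ (q + 1) := by
  obtain rfl := h.eq_zero_of_image_inv hF hq hY hinv
  obtain ⟨k, hk⟩ : ∃ k, ∀ z ∈ Y, z ^ (q + 1) = k := by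
    refine ⟨(-∏ k ∈ Y, (0 - k⁻¹))⁻¹, fun z hz => ?_⟩
    rw [← h.sub_inv_mul_inv_pow (by omega) hY hinv hz, zero_sub, neg_mul, neg_neg, ← pow_succ',
      inv_pow, inv_inv]
  have hsum : ∑ z ∈ Y, z ^ (q + 1) = k := by
    rw [sum_congr rfl hk, sum_const, hY, nsmul_eq_mul, Nat.cast_succ, natCast_eq_zero_of_card hF,
      zero_add, one_mul]
  have hroots : Y = (nthRoots (q + 1) k).toFinset := by
    refine eq_of_subset_of_card_le (fun z hz => ?_) ?_
    · rw [Multiset.mem_toFinset, mem_nthRoots q.succ_pos, hk z hz]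
    · rw [hY]
      exact (Multiset.toFinset_card_le _).trans (card_nthRoots _ _)
  rw [hsum, hroots, Multiset.mem_toFinset, mem_nthRoots q.succ_pos]

end Norm

section UnitalWord

open Finset Polynomial

variable {F W : Type*} [Field F] [AddCommGroup W] [Module F W]

theorem exists_linearIndependent_triple (hW : finrank F W = 3) {v t : W}
    (h : LinearIndependent F ![v, t]) : ∃ w, LinearIndependent F ![w, v, t] := by
  obtain ⟨w, -, hw⟩ := SetLike.exists_of_lt (lt_top_iff_ne_top.2 fun htop => by
    have hspan := finrank_span_eq_card h
    rw [htop, finrank_top, hW, Fintype.card_fin] at hspan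
    omega : Submodule.span F (Set.range ![v, t]) < ⊤)
  exact ⟨w, linearIndependent_finCons.2 ⟨h, hw⟩⟩

variable [Fintype F] {f : W → F} {t u b v w : W} {q : ℕ}

theorem exists_dual_eq_sum_mul (hf : f ∈ kernelCode F W) (hcard : 2 < Fintype.card F) (t : W) :
    ∃ ψ : Dual F W, ∀ v, ψ v = ∑ y : F, f (v + y • t) * y := by
  classical
  induction hf using Submodule.span_induction with
  | mem f h =>
    obtain ⟨φ, rfl⟩ := h
    refine ⟨(-(φ t)⁻¹) • φ, fun v => ?_⟩
    simp only [LinearMap.smul_apply, smul_eq_mul, Set.indicator_apply, Set.mem_ofPred_eq, map_add,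
      map_smul, Pi.one_apply, ite_mul, one_mul, zero_mul]
    by_cases ht : φ t = 0
    · have hsum : ∑ y : F, y = 0 := by
        simpa using FiniteField.sum_pow_lt_card_sub_one F 1 (by omega)
      by_cases hv : φ v = 0 <;> simp [ht, hv, hsum]
    · have hroot (y : F) : φ v + y * φ t = 0 ↔ y = -(φ t)⁻¹ * φ v := by
        field_simp
        constructor <;> intro h <;> linear_combination h
      simp [hroot]
  | zero => exact ⟨0, by simp⟩
  | add f g _ _ hf hg =>
    obtain ⟨ψ, hψ⟩ := hf
    obtain ⟨χ, hχ⟩ := hg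
    exact ⟨ψ + χ, fun v => by
      simp only [LinearMap.add_apply, hψ, hχ, Pi.add_apply, add_mul, sum_add_distrib]⟩
  | smul c f _ hf =>
    obtain ⟨ψ, hψ⟩ := hf
    exact ⟨c • ψ, fun v => by
      simp only [LinearMap.smul_apply, hψ, Pi.smul_apply, smul_eq_mul, mul_sum, mul_assoc]⟩

theorem fiber_swap [DecidableEq F] (hf : f ∈ kernelCode F W) (hv : f v = 0) (ht : f t = 0) :
    fiber f t v = (fiber f v t).image (·⁻¹) := by
  have hscale {y : F} (hy : y ≠ 0) : f (t + y⁻¹ • v) = f (v + y • t) := by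
    rw [← kernelCode_smul hf hy]
    congr 1
    rw [smul_add, smul_inv_smul₀ hy, add_comm]
  ext y
  simp only [mem_fiber, mem_image]
  constructor
  · intro h
    have hy : y ≠ 0 := by
      rintro rfl
      simp [ht] at h
    exact ⟨y⁻¹, by rwa [← hscale (inv_ne_zero hy), inv_inv], inv_inv y⟩
  · rintro ⟨z, hz, rfl⟩
    have hz0 : z ≠ 0 := by
      rintro rfl
      simp [hv] at hz
    rwa [hscale hz0]

/-- A codeword of a plane over `F`, as a function on vectors, which is the characteristic function
of a unital: each line through a point `t` off the support, given by `t` and a second point `v`,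
meets the support in `1` or `q + 1` points, and the support has `q ^ 3 + 1` points. The points are
counted on the line `⟨b, t⟩` and the lines `⟨u + x • b, t⟩` through `t`. -/
structure IsUnitalWord (q : ℕ) (f : W → F) : Prop where
  mem_kernelCode : f ∈ kernelCode F W
  eq_zero_or_eq_one {v : W} : v ≠ 0 → f v = 0 ∨ f v = 1
  card_fiber {v t : W} : f t = 0 → LinearIndependent F ![v, t] →
    #(fiber f v t) = 1 ∨ #(fiber f v t) = q + 1
  card_fiber_add_sum {u b t : W} : f t = 0 → LinearIndependent F ![u, b, t] →
    #(fiber f b t) + ∑ x : F, #(fiber f (u + x • b) t) = q ^ 3 + 1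

namespace IsUnitalWord

theorem card_tangents (h : IsUnitalWord q f) (hF : Fintype.card F = q ^ 2) (hq : 0 < q)
    (ht : f t = 0) (hli : LinearIndependent F ![u, b, t]) (hb : #(fiber f b t) = q + 1) :
    #{x : F | #(fiber f (u + x • b) t) = 1} = q + 1 := by
  have hterm (x : F) :
      #(fiber f (u + x • b) t) + q * (if #(fiber f (u + x • b) t) = 1 then 1 else 0) = q + 1 := by
    rcases h.card_fiber ht (linearIndependent_pair_add_smul hli x) with hx | hx
    · simp [hx, add_comm]
    · simp [hx, hq.ne']
  have hsum := sum_congr rfl fun x (_ : x ∈ (univ : Finset F)) => hterm x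
  rw [sum_add_distrib, ← mul_sum, sum_boole, sum_const, card_univ, hF, smul_eq_mul,
    Nat.cast_id] at hsum
  have hcount := h.card_fiber_add_sum ht hli
  rw [hb] at hcount
  refine Nat.eq_of_mul_eq_mul_left hq ?_
  nlinarith

theorem exists_card_fiber_eq (h : IsUnitalWord q f) (hF : Fintype.card F = q ^ 2) (hq : 1 < q)
    (ht : f t = 0) (hli : LinearIndependent F ![u, b, t]) :
    ∃ x : F, #(fiber f (u + x • b) t) = q + 1 := by
  by_contra! hne
  have hone (x : F) : #(fiber f (u + x • b) t) = 1 :=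
    (h.card_fiber ht (linearIndependent_pair_add_smul hli x)).resolve_right (hne x)
  have hcount := h.card_fiber_add_sum ht hli
  simp only [hone, sum_const, card_univ, hF, smul_eq_mul, mul_one] at hcount
  have hle : #(fiber f b t) ≤ q + 1 := by
    rcases h.card_fiber ht (linearIndependent_tail hli) with hb | hb <;> omega
  nlinarith

theorem sum_mul_pow (h : IsUnitalWord q f) (hli : LinearIndependent F ![v, t]) (j : ℕ) :
    ∑ y : F, f (v + y • t) * y ^ j = ∑ y ∈ fiber f v t, y ^ j := by
  classical
  rw [fiber, sum_filter]
  refine sum_congr rfl fun y _ => ?_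
  have hne : v + y • t ≠ 0 := fun h0 =>
    one_ne_zero (LinearIndependent.pair_iff.1 hli 1 y (by simpa using h0)).1
  rcases h.eq_zero_or_eq_one hne with h0 | h1 <;> simp [*]

theorem exists_secant (h : IsUnitalWord q f) (hF : Fintype.card F = q ^ 2) (hq : 1 < q)
    (hW : finrank F W = 3) (ht : f t = 0) (hli : LinearIndependent F ![v, t]) :
    ∃ b, LinearIndependent F ![v, b, t] ∧ #(fiber f b t) = q + 1 := by
  obtain ⟨w, hw⟩ := exists_linearIndependent_triple hW hli
  obtain ⟨x, hx⟩ := h.exists_card_fiber_eq hF hq ht hw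
  refine ⟨w + x • v, ?_, hx⟩
  rw [linearIndependent_triple_iff] at hw ⊢
  intro α β γ hsum
  obtain ⟨hβ, hα, hγ⟩ := hw β (α + β * x) γ (by rw [← hsum]; module)
  exact ⟨by simpa [hβ] using hα, hβ, hγ⟩

-- With `b` on a secant through `t`, the lines `⟨v + x • b, t⟩` include more than `q` tangents, at
-- which the polynomials `P j` and `P 1 ^ j` agree.
theorem isConcentratedAt (h : IsUnitalWord q f) (hF : Fintype.card F = q ^ 2) (hq : 1 < q)
    (hW : finrank F W = 3) (ht : f t = 0) (hli : LinearIndependent F ![v, t]) :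
    IsConcentratedAt q (fiber f v t) (∑ y ∈ fiber f v t, y) := by
  obtain ⟨b, hvb, hb⟩ := h.exists_secant hF hq hW ht hli
  choose P hP heval using exists_powerSum_of_mem_kernelCode h.mem_kernelCode v b t
  have hsum (j : ℕ) (x : F) : (P j).eval x = ∑ y ∈ fiber f (v + x • b) t, y ^ j := by
    rw [heval, h.sum_mul_pow (linearIndependent_pair_add_smul hvb x)]
  intro j hj
  have hPj : P j = P 1 ^ j := by
    refine eq_of_natDegree_lt_card_of_eval_eq' _ _ {x : F | #(fiber f (v + x • b) t) = 1} ?_ ?_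
    · intro x hx
      obtain ⟨y, hy⟩ := card_eq_one.1 (mem_filter.1 hx).2
      simp [hsum, hy]
    · rw [h.card_tangents hF (by omega) ht hvb hb]
      have hpow : (P 1 ^ j).natDegree ≤ j := by
        simpa using natDegree_pow_le_of_le j (hP 1)
      have hdeg := hP j
      omega
  have hzero := hsum j 0
  rw [hPj, eval_pow, hsum] at hzero
  simpa using hzero.symm

end IsUnitalWord

end UnitalWord

section Polarity

open Finset Polynomial

variable {F W : Type*} [Field F] [AddCommGroup W] [Module F W] [Fintype F] {f : W → F}
  {t v : W} {ψ χ : Dual F W} {q : ℕ}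

/-- The kernel of `ψ` is the polar line of the point `t`: the power sums do not distinguish the
parameters `y` of the points `v + y • t` of the unital from the parameter `ψ v` of the point of
that line. The value at `t` normalizes `ψ` so that `v + ψ v • t` lies in the kernel. -/
structure IsPolar (q : ℕ) (f : W → F) (t : W) (ψ : Dual F W) : Prop where
  apply_self : ψ t = -1
  isConcentratedAt {v : W} : LinearIndependent F ![v, t] →
    IsConcentratedAt q (fiber f v t) (ψ v)

namespace IsUnitalWord

theorem exists_isPolar (h : IsUnitalWord q f) (hF : Fintype.card F = q ^ 2) (hq : 1 < q)
    (hW : finrank F W = 3) (ht : f t = 0) (ht0 : t ≠ 0) : ∃ ψ : Dual F W, IsPolar q f t ψ := by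
  obtain ⟨ψ, hψ⟩ := exists_dual_eq_sum_mul h.mem_kernelCode (by rw [hF]; nlinarith) t
  have hpolar {v : W} (hli : LinearIndependent F ![v, t]) : ψ v = ∑ y ∈ fiber f v t, y := by
    simpa only [pow_one, hψ] using h.sum_mul_pow hli 1
  refine ⟨ψ, ?_, fun hli => hpolar hli ▸ h.isConcentratedAt hF hq hW ht hli⟩
  obtain ⟨v, hli⟩ : ∃ v, LinearIndependent F ![v, t] := by
    obtain ⟨v, hv⟩ := exists_linearIndependent_pair_of_one_lt_finrank (R := F) (by omega) ht0
    exact ⟨v, LinearIndependent.pair_symm_iff.1 hv⟩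
  have hcount : ∑ y : F, f (v + y • t) = 1 := by
    have hsum := h.sum_mul_pow hli 0
    simp only [pow_zero, mul_one, sum_const, nsmul_eq_mul] at hsum
    rw [hsum]
    rcases h.card_fiber ht hli with hv | hv <;> simp [hv, natCast_eq_zero_of_card hF]
  have hshift : ψ (v + t) = ψ v - 1 := by
    rw [hψ, hψ, ← hcount, ← sum_sub_distrib,
      ← Equiv.sum_comp (Equiv.addRight (-1)) fun y => f (v + t + y • t) * y]
    refine sum_congr rfl fun y _ => ?_
    rw [Equiv.coe_addRight, add_assoc, show t + (y + -1) • t = y • t by module]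
    ring
  rw [map_add] at hshift
  linear_combination hshift

theorem eq_zero_of_isPolar (hq : 0 < q) (hψ : IsPolar q f t ψ)
    (hli : LinearIndependent F ![v, t]) (hv : ψ v = 0) (hcard : #(fiber f v t) = q + 1) :
    f v = 0 := by
  have hmem := (hψ.isConcentratedAt hli).notMem hq hcard
  simpa [hv] using hmem

theorem isConcentratedAt_image_inv [DecidableEq F] (h : IsUnitalWord q f) (ht : f t = 0)
    (hfv : f v = 0) (hχ : IsPolar q f v χ) (hli : LinearIndependent F ![v, t]) :
    IsConcentratedAt q ((fiber f v t).image (·⁻¹)) (χ t) := by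
  rw [← fiber_swap h.mem_kernelCode hfv ht]
  exact hχ.isConcentratedAt (LinearIndependent.pair_symm_iff.1 hli)

theorem isPolar_apply_eq_zero (h : IsUnitalWord q f) (hF : Fintype.card F = q ^ 2) (hq : 1 < q)
    (ht : f t = 0) (hfv : f v = 0) (hψ : IsPolar q f t ψ) (hχ : IsPolar q f v χ)
    (hli : LinearIndependent F ![v, t]) (hv : ψ v = 0) (hcard : #(fiber f v t) = q + 1) :
    χ t = 0 := by
  classical
  have hconc := hψ.isConcentratedAt hli
  rw [hv] at hconc
  exact hconc.eq_zero_of_image_inv hF hq hcard (h.isConcentratedAt_image_inv ht hfv hχ hli)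

theorem ne_zero_iff_pow_eq (h : IsUnitalWord q f) (hF : Fintype.card F = q ^ 2) (hq : 1 < q)
    (hW : finrank F W = 3) (ht : f t = 0) (hψ : IsPolar q f t ψ)
    (hli : LinearIndependent F ![v, t]) (hv : ψ v = 0) (y : F) :
    f (v + y • t) ≠ 0 ↔ y ^ (q + 1) = ∑ z ∈ fiber f v t, z ^ (q + 1) := by
  classical
  have hconc := hψ.isConcentratedAt hli
  rw [hv] at hconc
  rw [← mem_fiber]
  rcases h.card_fiber ht hli with hcard | hcard
  · rw [hconc.eq_singleton (by omega) hcard]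
    simp
  · have hfv := eq_zero_of_isPolar (by omega) hψ hli hv hcard
    obtain ⟨χ, hχ⟩ := h.exists_isPolar hF hq hW hfv (hli.ne_zero 0)
    exact hconc.mem_iff_pow_eq hF hq hcard (h.isConcentratedAt_image_inv ht hfv hχ hli) y

end IsUnitalWord

end Polarity

section PolarFrame

open Finset Polynomial

variable {F W : Type*} [Field F] [AddCommGroup W] [Module F W] [Fintype F] {f : W → F}
  {u b t v : W} {ψ χ : Dual F W} {q : ℕ}

/-- A triangle `u`, `b`, `t` that is self-polar as far as the polar lines of `t` and `b` are
concerned, with `b` and `t` off the unital and their common line a secant. -/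
structure IsPolarFrame (q : ℕ) (f : W → F) (u b t : W) (ψ χ : Dual F W) : Prop where
  linearIndependent : LinearIndependent F ![u, b, t]
  apply_left : f b = 0
  apply_right : f t = 0
  isPolar_right : IsPolar q f t ψ
  isPolar_left : IsPolar q f b χ
  polar_right_left : ψ b = 0
  polar_right_top : ψ u = 0
  polar_left_right : χ t = 0
  polar_left_top : χ u = 0
  card_fiber : #(fiber f b t) = q + 1

theorem sum_fiber_smul (hf : f ∈ kernelCode F W) {a : F} (ha : a ≠ 0) (v t : W) (j : ℕ) :
    ∑ y ∈ fiber f (a • v) t, y ^ j = a ^ j * ∑ y ∈ fiber f v t, y ^ j := by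
  classical
  have hfiber : fiber f (a • v) t = (fiber f v t).image (a * ·) := by
    ext y
    have hscale : f (a • v + y • t) = f (v + (a⁻¹ * y) • t) := by
      rw [← kernelCode_smul hf ha (v + _), smul_add, smul_smul, mul_inv_cancel_left₀ ha]
    rw [mem_fiber, hscale, ← mem_fiber, mem_image]
    exact ⟨fun hy => ⟨_, hy, mul_inv_cancel_left₀ ha y⟩, by
      rintro ⟨z, hz, rfl⟩
      rwa [inv_mul_cancel_left₀ ha]⟩
  rw [hfiber, sum_image (mul_right_injective₀ ha).injOn, mul_sum]
  exact sum_congr rfl fun y _ => mul_pow a y j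

theorem IsUnitalWord.exists_isPolarFrame (h : IsUnitalWord q f) (hF : Fintype.card F = q ^ 2)
    (hq : 1 < q) (hW : finrank F W = 3) (ht0 : t ≠ 0) (ht : f t = 0) :
    ∃ u b ψ χ, IsPolarFrame q f u b t ψ χ := by
  obtain ⟨ψ, hψ⟩ := h.exists_isPolar hF hq hW ht ht0
  have hproj (v : W) : ψ (v + ψ v • t) = 0 := by simp [hψ.apply_self]
  obtain ⟨b, hb, hbt, hcard⟩ : ∃ b, ψ b = 0 ∧ LinearIndependent F ![b, t] ∧
      #(fiber f b t) = q + 1 := by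
    obtain ⟨v, hv⟩ : ∃ v, LinearIndependent F ![v, t] := by
      obtain ⟨v, hv⟩ := exists_linearIndependent_pair_of_one_lt_finrank (R := F) (by omega) ht0
      exact ⟨v, LinearIndependent.pair_symm_iff.1 hv⟩
    obtain ⟨w, hw⟩ := exists_linearIndependent_triple hW hv
    have hli : LinearIndependent F ![w + ψ w • t, v + ψ v • t, t] := by
      rw [linearIndependent_triple_iff] at hw ⊢
      intro x y z hsum
      obtain ⟨rfl, rfl, hz⟩ := hw x y (x * ψ w + y * ψ v + z) (by rw [← hsum]; module)
      exact ⟨rfl, rfl, by simpa using hz⟩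
    obtain ⟨x, hx⟩ := h.exists_card_fiber_eq hF hq ht hli
    exact ⟨_, by rw [map_add, map_smul, hproj, hproj, smul_zero, add_zero],
      linearIndependent_pair_add_smul hli x, hx⟩
  have hfb : f b = 0 := eq_zero_of_isPolar (by omega) hψ hbt hb hcard
  obtain ⟨χ, hχ⟩ := h.exists_isPolar hF hq hW hfb (hbt.ne_zero 0)
  have hχt : χ t = 0 := h.isPolar_apply_eq_zero hF hq ht hfb hψ hχ hbt hb hcard
  obtain ⟨w, hw⟩ := exists_linearIndependent_triple hW hbt
  refine ⟨w + ψ w • t + χ w • b, b, ψ, χ, ?_, hfb, ht, hψ, hχ, hb, ?_, hχt, ?_, hcard⟩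
  · rw [linearIndependent_triple_iff] at hw ⊢
    intro x y z hsum
    obtain ⟨rfl, hy, hz⟩ := hw x (x * χ w + y) (x * ψ w + z) (by rw [← hsum]; module)
    exact ⟨rfl, by simpa using hy, by simpa using hz⟩
  · rw [map_add, hproj, map_smul, hb, smul_zero, add_zero]
  · simp [hχt, hχ.apply_self]

namespace IsPolarFrame

variable (hP : IsPolarFrame q f u b t ψ χ) (h : IsUnitalWord q f)
  (hF : Fintype.card F = q ^ 2) (hW : finrank F W = 3)

include hP h hF hW

theorem fiber_eq_of_pow_eq (hq : 1 < q) {x x' : F} (hx : x ^ (q + 1) = x' ^ (q + 1)) :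
    fiber f (u + x • b) t = fiber f (u + x' • b) t := by
  ext y
  have hli := linearIndependent_pair_add_smul (linearIndependent_swap_tail hP.linearIndependent) y
  have hmem := h.ne_zero_iff_pow_eq hF hq hW hP.apply_left hP.isPolar_left hli
    (by simp [hP.polar_left_right, hP.polar_left_top])
  rw [mem_fiber, mem_fiber, add_right_comm u (x • b), add_right_comm u (x' • b), hmem, hmem, hx]

theorem exists_sum_fiber_eq (hq : 1 < q) : ∃ A : F, ∀ x : F,
    ∑ y ∈ fiber f (u + x • b) t, y ^ (q + 1) =
      A * x ^ (q + 1) + ∑ y ∈ fiber f u t, y ^ (q + 1) := by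
  classical
  obtain ⟨P, hPdeg, hPeval⟩ := exists_powerSum_of_mem_kernelCode h.mem_kernelCode u b t (q + 1)
  replace hPeval (x : F) : P.eval x = ∑ y ∈ fiber f (u + x • b) t, y ^ (q + 1) := by
    rw [hPeval, h.sum_mul_pow (linearIndependent_pair_add_smul hP.linearIndependent x)]
  have hbt := linearIndependent_tail hP.linearIndependent
  have hnorm {x : F} (hx : x ∈ fiber f t b) :
      x ^ (q + 1) = ∑ z ∈ fiber f t b, z ^ (q + 1) :=
    (h.ne_zero_iff_pow_eq hF hq hW hP.apply_left hP.isPolar_left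
      (LinearIndependent.pair_symm_iff.1 hbt) hP.polar_left_right x).1 (mem_fiber.1 hx)
  have hcard : #(fiber f t b) = q + 1 := by
    rw [fiber_swap h.mem_kernelCode hP.apply_left hP.apply_right,
      card_image_of_injective _ inv_injective, hP.card_fiber]
  obtain ⟨x₀, hx₀⟩ := card_pos.1 (q.succ_pos.trans_eq hcard.symm)
  -- `P` is constant on the `q + 1` roots of `X ^ (q + 1) = x₀ ^ (q + 1)`.
  set A := P.coeff (q + 1)
  have hdeg : (P - C A * X ^ (q + 1)).natDegree ≤ q :=
    natDegree_le_pred (n := q + 1)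
      ((natDegree_sub_le _ _).trans (max_le hPdeg (natDegree_C_mul_X_pow_le _ _))) (by simp [A])
  have hconst : P - C A * X ^ (q + 1) = C (P.eval x₀ - A * x₀ ^ (q + 1)) := by
    refine eq_of_natDegree_lt_card_of_eval_eq' _ _ (fiber f t b) (fun x hx => ?_) ?_
    · have hxx₀ : x ^ (q + 1) = x₀ ^ (q + 1) := (hnorm hx).trans (hnorm hx₀).symm
      simp only [eval_sub, eval_mul, eval_C, eval_pow, eval_X, hPeval, hxx₀,
        hP.fiber_eq_of_pow_eq h hF hW hq hxx₀]
    · rw [hcard, natDegree_C]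
      omega
  have hform (x : F) : P.eval x = A * x ^ (q + 1) + (P.eval x₀ - A * x₀ ^ (q + 1)) := by
    have := congrArg (eval x) hconst
    simp only [eval_sub, eval_mul, eval_C, eval_pow, eval_X] at this
    linear_combination this
  refine ⟨A, fun x => ?_⟩
  have hzero := hform 0
  rw [hPeval, zero_smul, add_zero, zero_pow q.succ_ne_zero, mul_zero, zero_add] at hzero
  rw [← hPeval, hform, hzero]

theorem sum_fiber_add_smul (hq : 2 < q) (x : F) :
    ∑ y ∈ fiber f (u + x • b) t, y ^ (q + 1) =
      (∑ y ∈ fiber f b t, y ^ (q + 1)) * x ^ (q + 1) + ∑ y ∈ fiber f u t, y ^ (q + 1) := by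
  classical
  obtain ⟨A, hA⟩ := hP.exists_sum_fiber_eq h hF hW (by omega)
  suffices hAb : ∑ y ∈ fiber f b t, y ^ (q + 1) = A by rw [hA, hAb]
  obtain ⟨Q, hQdeg, hQeval⟩ := exists_powerSum_of_mem_kernelCode h.mem_kernelCode b u t (q + 1)
  replace hQeval (z : F) : Q.eval z = ∑ y ∈ fiber f (b + z • u) t, y ^ (q + 1) := by
    rw [hQeval, h.sum_mul_pow
      (linearIndependent_pair_add_smul (linearIndependent_swap_head hP.linearIndependent) z)]
  set B := ∑ y ∈ fiber f u t, y ^ (q + 1)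
  have hQ : Q = C B * X ^ (q + 1) + C A := by
    refine eq_of_natDegree_lt_card_of_eval_eq' _ _ (univ.erase 0) (fun z hz => ?_) ?_
    · have hz0 : z ≠ 0 := ne_of_mem_erase hz
      have hsmul : b + z • u = z • (u + z⁻¹ • b) := by
        rw [smul_add, smul_inv_smul₀ hz0, add_comm]
      rw [hQeval, hsmul, sum_fiber_smul h.mem_kernelCode hz0, hA]
      simp only [eval_add, eval_mul, eval_C, eval_pow, eval_X, inv_pow]
      field
    · rw [card_erase_of_mem (mem_univ _), card_univ, hF]
      refine (max_le hQdeg ?_).trans_lt (?_ : q + 1 < _)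
      · compute_degree!
      · have := Nat.mul_le_mul_right q hq
        rw [sq]
        omega
  have hzero := hQeval 0
  simpa [hQ] using hzero.symm

theorem sum_fiber_left_ne_zero (hq : 1 < q) : ∑ y ∈ fiber f b t, y ^ (q + 1) ≠ 0 := by
  have hbt := linearIndependent_tail hP.linearIndependent
  obtain ⟨y, hy⟩ := card_pos.1 (q.succ_pos.trans_eq hP.card_fiber.symm)
  rw [mem_fiber] at hy
  have hy0 : y ≠ 0 := by
    rintro rfl
    simp [hP.apply_left] at hy
  rw [← (h.ne_zero_iff_pow_eq hF hq hW hP.apply_right hP.isPolar_right hbt hP.polar_right_left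
    y).1 hy]
  exact pow_ne_zero _ hy0

theorem sum_fiber_top_ne_zero (hq : 2 < q) : ∑ y ∈ fiber f u t, y ^ (q + 1) ≠ 0 := by
  obtain ⟨x, hx, hx0⟩ : ∃ x : F, #(fiber f (u + x • b) t) = 1 ∧ x ≠ 0 := by
    have htangents :=
      h.card_tangents hF (by omega) hP.apply_right hP.linearIndependent hP.card_fiber
    obtain ⟨x, hx, hx0⟩ := exists_mem_ne ((by omega : 1 < q + 1).trans_eq htangents.symm) 0
    exact ⟨x, (mem_filter.1 hx).2, hx0⟩
  have hpolar : ψ (u + x • b) = 0 := by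
    simp [hP.polar_right_top, hP.polar_right_left]
  have hconc := hP.isPolar_right.isConcentratedAt
    (linearIndependent_pair_add_smul hP.linearIndependent x)
  have hsum := hP.sum_fiber_add_smul h hF hW hq x
  rw [hconc.eq_singleton (by omega) hx, sum_singleton, hpolar, zero_pow q.succ_ne_zero] at hsum
  have hb := hP.sum_fiber_left_ne_zero h hF hW (by omega)
  intro hu
  rw [hu, add_zero] at hsum
  exact mul_ne_zero hb (pow_ne_zero _ hx0) hsum.symm

theorem sum_fiber_smul_add_smul (hq : 2 < q) (z x : F) (hz : z ≠ 0) :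
    ∑ y ∈ fiber f (z • u + x • b) t, y ^ (q + 1) =
      (∑ y ∈ fiber f u t, y ^ (q + 1)) * z ^ (q + 1) +
        (∑ y ∈ fiber f b t, y ^ (q + 1)) * x ^ (q + 1) := by
  have hsmul : z • u + x • b = z • (u + (z⁻¹ * x) • b) := by
    rw [smul_add, smul_smul, mul_inv_cancel_left₀ hz]
  rw [hsmul, sum_fiber_smul h.mem_kernelCode hz, hP.sum_fiber_add_smul h hF hW hq, mul_pow, inv_pow]
  field

theorem apply_ne_zero_iff (hq : 2 < q) {z x y : F} (hzxy : ¬(z = 0 ∧ x = 0 ∧ y = 0)) :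
    f (z • u + x • b + y • t) ≠ 0 ↔
      (∑ y ∈ fiber f u t, y ^ (q + 1)) * z ^ (q + 1) +
        (∑ y ∈ fiber f b t, y ^ (q + 1)) * x ^ (q + 1) = y ^ (q + 1) := by
  have hline {v : W} (hli : LinearIndependent F ![v, t]) (hv : ψ v = 0) :=
    h.ne_zero_iff_pow_eq hF (by omega) hW hP.apply_right hP.isPolar_right hli hv y
  have hli := linearIndependent_triple_iff.1 hP.linearIndependent
  by_cases hz : z = 0
  · by_cases hx : x = 0
    · have hy : y ≠ 0 := fun hy => hzxy ⟨hz, hx, hy⟩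
      simp [hz, hx, kernelCode_smul h.mem_kernelCode hy, hP.apply_right,
        (pow_ne_zero (q + 1) hy).symm]
    · rw [hz, zero_smul, zero_add, hline, sum_fiber_smul h.mem_kernelCode hx]
      · simp [eq_comm, mul_comm]
      · rw [LinearIndependent.pair_iff]
        intro α β hαβ
        have h0 := hli 0 (α * x) β (by rw [← hαβ]; module)
        exact ⟨by simpa [hx] using h0.2.1, h0.2.2⟩
      · simp [hP.polar_right_left]
  · rw [hline, hP.sum_fiber_smul_add_smul h hF hW hq z x hz, eq_comm]
    · rw [LinearIndependent.pair_iff]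
      intro α β hαβ
      have h0 := hli (α * z) (α * x) β (by rw [← hαβ]; module)
      exact ⟨by simpa [hz] using h0.1, h0.2.2⟩
    · simp [hP.polar_right_left, hP.polar_right_top]

end IsPolarFrame

theorem IsUnitalWord.sum_fiber_pow (h : IsUnitalWord q f) (hF : Fintype.card F = q ^ 2)
    (hq : 1 < q) (hW : finrank F W = 3) (ht : f t = 0) (hψ : IsPolar q f t ψ)
    (hli : LinearIndependent F ![v, t]) (hv : ψ v = 0) :
    (∑ y ∈ fiber f v t, y ^ (q + 1)) ^ q = ∑ y ∈ fiber f v t, y ^ (q + 1) := by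
  obtain ⟨y, hy⟩ : (fiber f v t).Nonempty := by
    rw [← card_pos]
    rcases h.card_fiber ht hli with hcard | hcard <;> omega
  rw [← (h.ne_zero_iff_pow_eq hF hq hW ht hψ hli hv y).1 (mem_fiber.1 hy),
    pow_succ_pow_of_card hF]

theorem IsUnitalWord.exists_diagonal_form (h : IsUnitalWord q f) (hF : Fintype.card F = q ^ 2)
    (hq : 2 < q) (hW : finrank F W = 3) (ht : f t = 0) (ht0 : t ≠ 0) :
    ∃ (e : (Fin 3 → F) ≃ₗ[F] W) (a : Fin 3 → F), (∀ i, a i ≠ 0 ∧ a i ^ q = a i) ∧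
      ∀ y ≠ 0, f (e y) ≠ 0 ↔ ∑ i, a i * y i ^ (q + 1) = 0 := by
  obtain ⟨u, b, ψ, χ, hP⟩ := h.exists_isPolarFrame hF (by omega) hW ht0 ht
  have hneg : (-1 : F) ^ q = -1 := by
    simpa [show q ≠ 0 by omega] using sub_pow_of_card hF 0 1
  let basis := basisOfLinearIndependentOfCardEqFinrank hP.linearIndependent (by simp [hW])
  refine ⟨basis.equivFun.symm, ![∑ y ∈ fiber f u t, y ^ (q + 1), ∑ y ∈ fiber f b t, y ^ (q + 1),
    -1], ?_, fun y hy => ?_⟩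
  · have hut := linearIndependent_pair_add_smul hP.linearIndependent 0
    rw [zero_smul, add_zero] at hut
    simp only [Fin.forall_fin_succ, IsEmpty.forall_iff, and_true]
    exact ⟨⟨hP.sum_fiber_top_ne_zero h hF hW hq, h.sum_fiber_pow hF (by omega) hW ht
        hP.isPolar_right hut hP.polar_right_top⟩,
      ⟨hP.sum_fiber_left_ne_zero h hF hW (by omega), h.sum_fiber_pow hF (by omega) hW ht
        hP.isPolar_right (linearIndependent_tail hP.linearIndependent) hP.polar_right_left⟩,
      by simp [hneg]⟩
  · have hy' : ¬(y 0 = 0 ∧ y 1 = 0 ∧ y 2 = 0) := fun ⟨h0, h1, h2⟩ =>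
      hy (by ext i; fin_cases i <;> assumption)
    have hbasis : basis.equivFun.symm y = y 0 • u + y 1 • b + y 2 • t := by
      simp [basis, Basis.equivFun_symm_apply, Fin.sum_univ_three]
    rw [hbasis, hP.apply_ne_zero_iff h hF hW hq hy', Fin.sum_univ_three]
    simp [add_neg_eq_zero]

end PolarFrame

/-! ### Plane sections -/

section Points

open Finset Projectivization
open scoped LinearAlgebra.Projectivization

variable {F : Type} [Field F] {n : ℕ}

instance [Finite F] : Finite (ProjPoint F n) := by
  unfold ProjPoint
  infer_instance

section Embed

variable {W : Type*} [AddCommGroup W] [Module F W] {e : W →ₗ[F] (Fin n → F)}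

/-- The map of projective spaces induced by an injective linear map `e`; it is used to
coordinatize subspaces of PG(n - 1, |F|), and to pass from `ProjPoint` to Mathlib's `ℙ`. -/
def embed (e : W →ₗ[F] (Fin n → F)) (he : Function.Injective e) (x : ℙ F W) : ProjPoint F n :=
  ⟨x.submodule.map e,
    (Submodule.equivMapOfInjective e he x.submodule).finrank_eq.symm.trans x.finrank_submodule⟩

theorem embed_injective (he : Function.Injective e) : Function.Injective (embed e he) :=
  fun _ _ hxy => submodule_injective
    (Submodule.map_injective_of_injective he (congrArg Subtype.val hxy))

theorem coe_embed (he : Function.Injective e) (x : ℙ F W) :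
    (embed e he x).1 = x.submodule.map e :=
  rfl

theorem coe_embed_mk (he : Function.Injective e) {v : W} (hv : v ≠ 0) :
    (embed e he (Projectivization.mk F v hv)).1 = Submodule.span F {e v} := by
  rw [coe_embed, submodule_mk, Submodule.map_span, Set.image_singleton]

theorem embed_mem_pointsIn_iff (he : Function.Injective e) {x : ℙ F W}
    {S : Submodule F (Fin n → F)} : embed e he x ∈ pointsIn F n S ↔ e x.rep ∈ S := by
  rw [← Submodule.span_singleton_le_iff_mem, ← coe_embed_mk he x.rep_nonzero, x.mk_rep]
  rfl

theorem range_embed (he : Function.Injective e) :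
    Set.range (embed e he) = pointsIn F n (LinearMap.range e) := by
  refine Set.Subset.antisymm ?_ fun P hP => ?_
  · rintro _ ⟨x, rfl⟩
    exact LinearMap.map_le_range
  · have hP1 : finrank F (P.1.comap e) = 1 := by
      rw [(Submodule.equivMapOfInjective e he _).finrank_eq, Submodule.map_comap_eq_self hP, P.2]
    refine ⟨Projectivization.mk'' _ hP1, Subtype.ext ?_⟩
    rw [coe_embed, submodule_mk'', Submodule.map_comap_eq_self hP]

theorem ncard_preimage_embed (he : Function.Injective e) (V : Set (ProjPoint F n)) :
    (embed e he ⁻¹' V).ncard = secant F n V (LinearMap.range e) := by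
  rw [← Set.ncard_image_of_injective _ (embed_injective he), Set.image_preimage_eq_inter_range,
    range_embed, secant]

end Embed

theorem natCard_projectivization_eq_ncard_pointsIn (W : Submodule F (Fin n → F)) :
    Nat.card (ℙ F W) = (pointsIn F n W).ncard := by
  have h := range_embed (e := W.subtype) W.subtype_injective
  rw [Submodule.range_subtype] at h
  rw [← h, ← Set.ncard_univ, ← Set.image_univ,
    Set.ncard_image_of_injective _ (embed_injective W.subtype_injective)]

variable [Finite F] {p : ℕ}

theorem natCast_ncard_pointsIn (hp : p ∣ Nat.card F) {W : Submodule F (Fin n → F)}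
    (hW : 1 ≤ finrank F W) : ((pointsIn F n W).ncard : ZMod p) = 1 := by
  obtain ⟨m, hm⟩ := Nat.exists_eq_add_of_le' hW
  have hcard : (Nat.card F : ZMod p) = 0 := (ZMod.natCast_eq_zero_iff _ _).2 hp
  rw [← natCard_projectivization_eq_ncard_pointsIn, card_of_finrank F W hm, sum_range_succ',
    Nat.cast_add, Nat.cast_sum, sum_eq_zero fun i _ => by
      rw [Nat.cast_pow, hcard, zero_pow i.succ_ne_zero]]
  simp

end Points

section HyperplaneCode

open Finset Projectivization Configuration
open scoped LinearAlgebra.Projectivization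

variable {F : Type} [Field F] {r p : ℕ}

theorem exists_dual_ker_eq {W : Type*} [AddCommGroup W] [Module F W] [FiniteDimensional F W]
    {H : Submodule F W} (hH : finrank F H + 1 = finrank F W) :
    ∃ φ : Dual F W, LinearMap.ker φ = H := by
  have hlt : H < ⊤ := lt_top_iff_ne_top.2 fun h => by rw [h, finrank_top] at hH; lia
  obtain ⟨φ, hφ, hle⟩ := H.exists_le_ker_of_lt_top hlt
  have hker := Module.Dual.finrank_ker_add_one_of_ne_zero hφ
  exact ⟨φ, (Submodule.eq_of_le_of_finrank_eq hle (by lia)).symm⟩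

theorem castHom_comp_embed_mem_planeCode [CharP F p]
    {e : (Fin 3 → F) →ₗ[F] (Fin (r + 1) → F)} (he : Function.Injective e)
    {c : ProjPoint F (r + 1) → ZMod p} (hc : c ∈ hypCode F p (r + 1)) :
    (fun x => ZMod.castHom dvd_rfl F (c (embed e he x))) ∈ planeCode F := by
  classical
  induction hc using Submodule.span_induction with
  | mem c h =>
    obtain ⟨H, hH, rfl⟩ := h
    obtain ⟨φ, rfl⟩ := exists_dual_ker_eq (H := H) (by rw [hH, finrank_fin_fun]; lia)
    refine ⟨_, indicator_mem_kernelCode (φ ∘ₗ e), funext fun x => ?_⟩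
    simp [charVec, Set.indicator_apply, embed_mem_pointsIn_iff, apply_ite]
  | zero =>
    simpa only [Pi.zero_apply, map_zero, Pi.zero_def] using (planeCode F).zero_mem
  | add c d _ _ hc hd =>
    simpa only [Pi.add_apply, map_add, Pi.add_def] using (planeCode F).add_mem hc hd
  | smul a c _ hc =>
    simpa only [Pi.smul_apply, smul_eq_mul, map_mul, Pi.smul_def] using
      (planeCode F).smul_mem (ZMod.castHom dvd_rfl F a) hc

theorem sum_charVec [Fintype (ProjPoint F (r + 1))] (S T : Set (ProjPoint F (r + 1)))
    [DecidablePred (· ∈ T)] :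
    ∑ P with P ∈ T, charVec F p (r + 1) S P = ((S ∩ T).ncard : ZMod p) := by
  classical
  have hcard : (S ∩ T).ncard = #{P | P ∈ T ∧ P ∈ S} := by
    rw [← Set.ncard_coe_finset]
    congr 1
    ext
    simp [and_comm]
  simp [charVec, Set.indicator_apply, sum_boole, filter_filter, hcard]

theorem natCast_secant_eq_ncard [Finite F] (hp : p ∣ Nat.card F) {V : Set (ProjPoint F (r + 1))}
    (hV : charVec F p (r + 1) V ∈ hypCode F p (r + 1))
    {W : Submodule F (Fin (r + 1) → F)} (hW : 2 ≤ finrank F W) :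
    (secant F (r + 1) V W : ZMod p) = V.ncard := by
  classical
  have := Fintype.ofFinite (ProjPoint F (r + 1))
  have hW' := W.finrank_le
  rw [finrank_fin_fun] at hW'
  let coordSum (T : Set (ProjPoint F (r + 1))) : (ProjPoint F (r + 1) → ZMod p) →ₗ[ZMod p] ZMod p :=
    ∑ P with P ∈ T, LinearMap.proj P
  have hcoordSum (S T : Set (ProjPoint F (r + 1))) :
      coordSum T (charVec F p (r + 1) S) = ((S ∩ T).ncard : ZMod p) := by
    simp only [coordSum, LinearMap.sum_apply, LinearMap.proj_apply, sum_charVec]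
  have hgen : Set.EqOn (coordSum (pointsIn F (r + 1) W)) (coordSum Set.univ)
      (hypCode F p (r + 1)) := by
    refine LinearMap.eqOn_span ?_
    rintro _ ⟨H, hH, rfl⟩
    have hinter : pointsIn F (r + 1) H ∩ pointsIn F (r + 1) W = pointsIn F (r + 1) (H ⊓ W) := by
      ext P
      simp [pointsIn]
    have hdim := Submodule.finrank_sup_add_finrank_inf_eq H W
    have hsup := (H ⊔ W).finrank_le
    rw [finrank_fin_fun] at hsup
    rw [hcoordSum, hcoordSum, Set.inter_univ, hinter, natCast_ncard_pointsIn hp (by lia),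
      natCast_ncard_pointsIn hp (by lia)]
  have h := hgen hV
  rwa [hcoordSum, hcoordSum, Set.inter_univ] at h

end HyperplaneCode

section PlaneSections

open Finset Projectivization Configuration
open scoped LinearAlgebra.Projectivization

variable {F : Type} [Field F] {n p : ℕ} {e : (Fin 3 → F) →ₗ[F] (Fin n → F)}

/-- The line of PG(n - 1, |F|) that is the image under `e` of the line of PG(2, |F|) with
coordinates `l.rep`. -/
noncomputable def lineIn (e : (Fin 3 → F) →ₗ[F] (Fin n → F)) (l : ℙ F (Fin 3 → F)) :
    Submodule F (Fin n → F) :=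
  (LinearMap.ker (dotProductBilin F F l.rep)).map e

theorem lineIn_le_range (l : ℙ F (Fin 3 → F)) : lineIn e l ≤ LinearMap.range e :=
  LinearMap.map_le_range

theorem finrank_lineIn (he : Function.Injective e) (l : ℙ F (Fin 3 → F)) :
    finrank F (lineIn e l) = 2 := by
  have hne : dotProductBilin F F l.rep ≠ 0 := fun h =>
    l.rep_nonzero (dotProduct_eq_zero_iff.1 fun w => LinearMap.congr_fun h w)
  have hker := Module.Dual.finrank_ker_add_one_of_ne_zero hne
  rw [finrank_fin_fun] at hker
  rw [lineIn, ← (Submodule.equivMapOfInjective e he _).finrank_eq]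
  lia

theorem embed_mem_pointsIn_lineIn_iff (he : Function.Injective e) {x l : ℙ F (Fin 3 → F)} :
    embed e he x ∈ pointsIn F n (lineIn e l) ↔ x ∈ l := by
  rw [embed_mem_pointsIn_iff, lineIn, ← SetLike.mem_coe, Submodule.map_coe, he.mem_set_image,
    SetLike.mem_coe, LinearMap.mem_ker]
  conv_rhs => rw [← x.mk_rep, mk_mem_iff, dotProduct_comm]
  rfl

theorem exists_lineIn_eq (he : Function.Injective e) {ℓ : Submodule F (Fin n → F)}
    (hℓ : ℓ ≤ LinearMap.range e) (hdim : finrank F ℓ = 2) : ∃ l, lineIn e l = ℓ := by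
  have hcomap : finrank F (ℓ.comap e) = 2 := by
    rw [(Submodule.equivMapOfInjective e he _).finrank_eq, Submodule.map_comap_eq_self hℓ, hdim]
  obtain ⟨φ, hφ⟩ := exists_dual_ker_eq (H := ℓ.comap e) (by rw [hcomap, finrank_fin_fun])
  obtain ⟨w, rfl⟩ := (dotProductEquiv F (Fin 3)).surjective φ
  have hw : w ≠ 0 := by
    rintro rfl
    rw [map_zero, LinearMap.ker_zero] at hφ
    rw [← hφ, finrank_top, finrank_fin_fun] at hcomap
    lia
  obtain ⟨a, ha⟩ := exists_smul_eq_mk_rep F w hw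
  refine ⟨Projectivization.mk F w hw, ?_⟩
  rw [lineIn, ← Submodule.map_comap_eq_self hℓ, ← hφ, ← ha, Units.smul_def, map_smul,
    LinearMap.ker_smul _ _ a.ne_zero]
  rfl

section Finite

variable [Finite F]

theorem lineIn_injective (he : Function.Injective e) : Function.Injective (lineIn e) := by
  classical
  intro l m hlm
  have hmem (x : ℙ F (Fin 3 → F)) : x ∈ l ↔ x ∈ m := by
    rw [← embed_mem_pointsIn_lineIn_iff he, hlm, embed_mem_pointsIn_lineIn_iff]
  obtain ⟨x, hx, y, hy, hxy⟩ : ∃ x ∈ pointsOn (ℙ F (Fin 3 → F)) l,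
      ∃ y ∈ pointsOn (ℙ F (Fin 3 → F)) l, x ≠ y := by
    rw [← one_lt_card, card_pointsOn]
    have := ProjectivePlane.one_lt_order (ℙ F (Fin 3 → F)) (ℙ F (Fin 3 → F))
    lia
  rw [mem_pointsOn] at hx hy
  exact (Nondegenerate.eq_or_eq hx hy ((hmem x).1 hx) ((hmem y).1 hy)).resolve_left hxy

/-- The plane section of `V` by the range of `e`, in the coordinates given by `e`. -/
noncomputable def planeSection (he : Function.Injective e) (V : Set (ProjPoint F n)) :
    Finset (ℙ F (Fin 3 → F)) :=
  (embed e he ⁻¹' V).toFinite.toFinset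

variable {V : Set (ProjPoint F n)}

@[simp]
theorem mem_planeSection {he : Function.Injective e} {x : ℙ F (Fin 3 → F)} :
    x ∈ planeSection he V ↔ embed e he x ∈ V := by
  simp [planeSection]

theorem card_planeSection (he : Function.Injective e) :
    #(planeSection he V) = secant F n V (LinearMap.range e) := by
  rw [← ncard_preimage_embed he, ← Set.ncard_coe_finset, planeSection, Set.Finite.coe_toFinset]

theorem secantCard_planeSection (he : Function.Injective e) (l : ℙ F (Fin 3 → F)) :
    secantCard (planeSection he V) l = secant F n V (lineIn e l) := by
  have hline : V ∩ pointsIn F n (lineIn e l) ⊆ Set.range (embed e he) := by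
    rw [range_embed]
    exact fun P hP => le_trans hP.2 (lineIn_le_range l)
  rw [secant, ← Set.ncard_preimage_of_injective_subset_range (embed_injective he) hline,
    secantCard, ← Set.ncard_coe_finset]
  congr 1
  ext x
  simp [embed_mem_pointsIn_lineIn_iff]

theorem indicator_planeSection_apply [CharP F p] (he : Function.Injective e)
    (x : ℙ F (Fin 3 → F)) : (planeSection he V : Set (ℙ F (Fin 3 → F))).indicator 1 x =
      ZMod.castHom dvd_rfl F (charVec F p n V (embed e he x)) := by
  classical
  simp [charVec, Set.indicator_apply, apply_ite]

end Finite

end PlaneSections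

section PlanesThroughLine

open Finset Projectivization Configuration
open scoped LinearAlgebra.Projectivization

variable {F : Type} [Field F] {n : ℕ}

theorem finrank_comap_mkQ_submodule {ℓ : Submodule F (Fin n → F)}
    (y : ℙ F ((Fin n → F) ⧸ ℓ)) : finrank F (y.submodule.comap ℓ.mkQ) = finrank F ℓ + 1 := by
  obtain ⟨w, hw⟩ := ℓ.mkQ_surjective y.rep
  have hwℓ : w ∉ ℓ := by
    rw [← Submodule.Quotient.mk_eq_zero, ← Submodule.mkQ_apply, hw]
    exact y.rep_nonzero
  rw [submodule_eq, ← hw, ← Set.image_singleton, ← Submodule.map_span, Submodule.comap_map_mkQ]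
  exact Submodule.finrank_sup_span_singleton hwℓ

theorem eq_of_mem_pointsIn_comap_mkQ {ℓ : Submodule F (Fin n → F)} {P : ProjPoint F n}
    (hP : P ∉ pointsIn F n ℓ) {y z : ℙ F ((Fin n → F) ⧸ ℓ)}
    (hy : P ∈ pointsIn F n (y.submodule.comap ℓ.mkQ))
    (hz : P ∈ pointsIn F n (z.submodule.comap ℓ.mkQ)) : y = z := by
  have hne : P.1.map ℓ.mkQ ≠ ⊥ := by
    rw [Ne, ← LinearMap.le_ker_iff_map, Submodule.ker_mkQ]
    exact hP
  have heq {x : ℙ F ((Fin n → F) ⧸ ℓ)} (hx : P ∈ pointsIn F n (x.submodule.comap ℓ.mkQ)) :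
      P.1.map ℓ.mkQ = x.submodule := by
    refine Submodule.eq_of_le_of_finrank_le (Submodule.map_le_iff_le_comap.2 hx) ?_
    rw [x.finrank_submodule]
    exact Submodule.one_le_finrank_iff.2 hne
  exact submodule_injective ((heq hy).symm.trans (heq hz))

theorem secant_add_card_mul_le_ncard [Finite F] {V : Set (ProjPoint F n)}
    {ℓ : Submodule F (Fin n → F)} {D : ℕ}
    (hD : ∀ ρ, ℓ ≤ ρ → finrank F ρ = finrank F ℓ + 1 → secant F n V ℓ + D ≤ secant F n V ρ) :
    secant F n V ℓ + Nat.card (ℙ F ((Fin n → F) ⧸ ℓ)) * D ≤ V.ncard := by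
  classical
  have := Fintype.ofFinite (ProjPoint F n)
  have := Finite.of_surjective _ ℓ.mkQ_surjective
  have := Fintype.ofFinite (ℙ F ((Fin n → F) ⧸ ℓ))
  let E : Finset (ProjPoint F n) := {P | P ∈ V \ pointsIn F n ℓ}
  have hdouble : #(univ : Finset (ℙ F ((Fin n → F) ⧸ ℓ))) * D ≤ #E * 1 := by
    refine card_mul_le_card_mul (fun y P => P ∈ pointsIn F n (y.submodule.comap ℓ.mkQ))
      (fun y _ => ?_) fun P hP => ?_
    · have hle : ℓ ≤ y.submodule.comap ℓ.mkQ := by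
        conv_lhs => rw [← ℓ.ker_mkQ]
        exact LinearMap.ker_le_comap _
      have hsub : V ∩ pointsIn F n ℓ ⊆ V ∩ pointsIn F n (y.submodule.comap ℓ.mkQ) :=
        fun P hP => ⟨hP.1, le_trans hP.2 hle⟩
      have hdiff : (V ∩ pointsIn F n (y.submodule.comap ℓ.mkQ)) \ (V ∩ pointsIn F n ℓ) =
          E.bipartiteAbove (fun y P => P ∈ pointsIn F n (y.submodule.comap ℓ.mkQ)) y := by
        ext P
        simp only [bipartiteAbove, E, Set.mem_sdiff, Set.mem_inter_iff, coe_filter, mem_filter,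
          mem_univ, true_and, Set.mem_ofPred_eq]
        tauto
      rw [← Set.ncard_coe_finset, ← hdiff, Set.ncard_sdiff hsub]
      exact Nat.le_sub_of_add_le' (hD _ hle (finrank_comap_mkQ_submodule y))
    · rw [card_le_one]
      intro y hy z hz
      simp only [bipartiteBelow, E, mem_filter, mem_univ, true_and] at hP hy hz
      exact eq_of_mem_pointsIn_comap_mkQ hP.2 hy hz
  have hV : secant F n V ℓ + #E = V.ncard := by
    rw [← Set.ncard_inter_add_ncard_sdiff_eq_ncard V (pointsIn F n ℓ), secant,
      ← Set.ncard_coe_finset]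
    simp only [E, coe_filter, mem_univ, true_and]
    rfl
  rw [Nat.card_eq_fintype_card, ← card_univ]
  lia

end PlanesThroughLine

section LineGap

open Finset Projectivization Configuration
open scoped LinearAlgebra.Projectivization

variable {F : Type} [Field F]

theorem exists_injective_range_eq {W : Type*} [AddCommGroup W] [Module F W] {m : ℕ}
    {π : Submodule F W} [FiniteDimensional F π] (hπ : finrank F π = m) :
    ∃ e : (Fin m → F) →ₗ[F] W, Function.Injective e ∧ LinearMap.range e = π := by
  let E : (Fin m → F) ≃ₗ[F] π := LinearEquiv.ofFinrankEq _ _ (by rw [hπ, finrank_fin_fun])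
  refine ⟨π.subtype ∘ₗ E, π.subtype_injective.comp E.injective, ?_⟩
  rw [LinearMap.range_comp, LinearEquiv.range, Submodule.map_top, Submodule.range_subtype]

variable [Finite F] {p r : ℕ} [CharP F p] {V : Set (ProjPoint F (r + 1))}

theorem indicator_planeSection_mem_planeCode {e : (Fin 3 → F) →ₗ[F] (Fin (r + 1) → F)}
    (he : Function.Injective e) (hV : charVec F p (r + 1) V ∈ hypCode F p (r + 1)) :
    (planeSection he V : Set (ℙ F (Fin 3 → F))).indicator 1 ∈ planeCode F := by
  convert castHom_comp_embed_mem_planeCode he hV using 1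
  exact funext (indicator_planeSection_apply he)

theorem char_dvd_natCard : p ∣ Nat.card F := by
  have := Fintype.ofFinite F
  rw [← CharP.cast_eq_zero_iff F p, Nat.card_eq_fintype_card, Nat.cast_card_eq_zero]

theorem secant_pos (hV : charVec F p (r + 1) V ∈ hypCode F p (r + 1))
    (hmod : (V.ncard : ZMod p) = 1) {W : Submodule F (Fin (r + 1) → F)} (hW : 2 ≤ finrank F W) :
    0 < secant F (r + 1) V W := by
  have : Fact p.Prime := ⟨CharP.char_is_prime F p⟩
  have hsecant := natCast_secant_eq_ncard char_dvd_natCard hV hW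
  refine Nat.pos_of_ne_zero fun h0 => ?_
  rw [h0, hmod, Nat.cast_zero] at hsecant
  exact zero_ne_one hsecant

theorem secant_line_mul_lt_secant_plane (hV : charVec F p (r + 1) V ∈ hypCode F p (r + 1))
    (hmod : (V.ncard : ZMod p) = 1) {ℓ ρ : Submodule F (Fin (r + 1) → F)} (hle : ℓ ≤ ρ)
    (hℓ : finrank F ℓ = 2) (hρ : finrank F ρ = 3) (hs : secant F (r + 1) V ℓ ≤ Nat.card F) :
    secant F (r + 1) V ℓ * (Nat.card F + 1) <
      secant F (r + 1) V ρ + secant F (r + 1) V ℓ ^ 2 := by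
  classical
  obtain ⟨e, he, rfl⟩ := exists_injective_range_eq hρ
  obtain ⟨l, rfl⟩ := exists_lineIn_eq he hle hℓ
  rw [← secantCard_planeSection he, ← order_eq_card] at hs
  obtain ⟨x, hxl, hxV⟩ := exists_mem_line_notMem hs
  obtain ⟨m, hxm, hml⟩ := exists_mem_line_ne x l
  have hbound := secantBound_codeSupport_of_mem_planeCode
    (indicator_planeSection_mem_planeCode he hV)
  rw [codeSupport_indicator_one] at hbound
  have hlm := hbound x l m hxV hxl hxm hml.symm
  have hm := secant_pos hV hmod (finrank_lineIn he m).ge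
  rw [secantCard_planeSection, secantCard_planeSection, card_planeSection, order_eq_card] at hlm
  lia

theorem natCard_projectivization_quotient_mul {n : ℕ} (ℓ : Submodule F (Fin n → F)) :
    Nat.card (ℙ F ((Fin n → F) ⧸ ℓ)) * (Nat.card F - 1) + 1 =
      Nat.card F ^ (n - finrank F ℓ) := by
  have := Finite.of_surjective _ ℓ.mkQ_surjective
  have hdim := ℓ.finrank_quotient_add_finrank
  rw [finrank_fin_fun] at hdim
  rw [← card', Module.natCard_eq_pow_finrank (K := F)]
  congr 1
  lia

-- Here `a = q ^ (r - 1)` and `ε = (-1) ^ r`, so `hN` bounds the size `N` of a quasi-Hermitian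
-- variety and `(a ^ 2 - 1) / (q ^ 2 - 1)` is the number of planes through a line.
theorem sub_mul_lt_of_mul_le {q a ε N s : ℤ} (hq : 4 < q) (hs : 0 < s)
    (hε : ε = 1 ∧ q ≤ a ∨ ε = -1 ∧ q ^ 2 ≤ a)
    (hN : N * (q ^ 2 - 1) ≤ (a * q ^ 2 + ε) * (a * q - ε)) :
    (N - s) * (q ^ 2 - 1) < (q ^ 3 + 1) * (a ^ 2 - 1) := by
  have hspos : 0 < s * (q ^ 2 - 1) := mul_pos hs (by nlinarith)
  rcases hε with ⟨rfl, ha⟩ | ⟨rfl, ha⟩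
  · have h1 : 0 ≤ (a - q) * (a + q ^ 2) := mul_nonneg (by linarith) (by nlinarith)
    linarith
  · have h1 : 0 ≤ (a - q ^ 2) * (a + q) := mul_nonneg (by linarith) (by nlinarith)
    linarith

theorem neg_one_pow_eq_and_le_pow_or {q r : ℕ} (hq : 0 < q) (hr : 2 ≤ r) :
    (-1 : ℤ) ^ r = 1 ∧ (q : ℤ) ≤ (q : ℤ) ^ (r - 1) ∨
      (-1 : ℤ) ^ r = -1 ∧ (q : ℤ) ^ 2 ≤ (q : ℤ) ^ (r - 1) := by
  rcases r.even_or_odd with h | h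
  · exact .inl ⟨h.neg_one_pow, by exact_mod_cast Nat.le_self_pow (by lia) q⟩
  · have hr1 : 2 ≤ r - 1 := by
      obtain ⟨k, rfl⟩ := h
      lia
    exact .inr ⟨h.neg_one_pow, by exact_mod_cast Nat.pow_le_pow_right hq hr1⟩

-- If `q + 1 < |ℓ ∩ V| < q ^ 2 - q - 1`, then every plane through `ℓ` has at least `q ^ 3 + 1`
-- points of `V` off `ℓ`, which is more than `V` has room for.
theorem secant_line_le_or_le {q : ℕ} (hF : Nat.card F = q ^ 2) (hq : 4 < q) (hr : 2 ≤ r)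
    (hV : charVec F p (r + 1) V ∈ hypCode F p (r + 1)) (hmod : (V.ncard : ZMod p) = 1)
    (hcard : (V.ncard : ℤ) * ((q : ℤ) ^ 2 - 1) ≤
      ((q : ℤ) ^ (r + 1) + (-1) ^ r) * ((q : ℤ) ^ r - (-1) ^ r))
    {ℓ : Submodule F (Fin (r + 1) → F)} (hℓ : finrank F ℓ = 2) :
    secant F (r + 1) V ℓ ≤ q + 1 ∨ q ^ 2 ≤ secant F (r + 1) V ℓ + q + 1 := by
  by_contra! hgap
  obtain ⟨hlow, hhigh⟩ := hgap
  have hplane (ρ) (hle : ℓ ≤ ρ) (hρ : finrank F ρ = finrank F ℓ + 1) :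
      secant F (r + 1) V ℓ + (q ^ 3 + 1) ≤ secant F (r + 1) V ρ := by
    have hlt := secant_line_mul_lt_secant_plane hV hmod hle hℓ (by lia) (by lia)
    rw [hF] at hlt
    zify at hq hlow hhigh hlt ⊢
    nlinarith [mul_nonneg (sub_nonneg.2 hlow.le) (sub_nonneg.2 hhigh.le)]
  have hcount := secant_add_card_mul_le_ncard hplane
  have hplanes := natCard_projectivization_quotient_mul ℓ
  rw [hF, hℓ, show r + 1 - 2 = r - 1 by lia, ← pow_mul, mul_comm 2, pow_mul] at hplanes
  have hpred : ((q ^ 2 - 1 : ℕ) : ℤ) = (q : ℤ) ^ 2 - 1 := by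
    rw [Nat.cast_sub (Nat.one_le_pow _ _ (by lia))]
    simp
  have hpow : (q : ℤ) ^ r = (q : ℤ) ^ (r - 1) * q := by
    rw [← pow_succ, Nat.sub_add_cancel (by lia)]
  rw [pow_succ _ r, hpow, mul_assoc _ (q : ℤ) q, ← sq (q : ℤ)] at hcard
  have hroom := sub_mul_lt_of_mul_le (by lia)
    (s := secant F (r + 1) V ℓ) (by exact_mod_cast secant_pos hV hmod hℓ.ge)
    (neg_one_pow_eq_and_le_pow_or (by lia) hr) hcard
  have hplanes' := congrArg (Nat.cast (R := ℤ)) hplanes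
  have hcount' := Nat.cast_le (α := ℤ).2 hcount
  push_cast [hpred] at hplanes' hcount'
  have hq1 : (0 : ℤ) ≤ (q : ℤ) ^ 2 - 1 := by rw [← hpred]; positivity
  rw [← hplanes', add_sub_cancel_right, ← mul_assoc] at hroom
  linarith [lt_of_mul_lt_mul_right hroom hq1]

end LineGap

section Unitals

open Finset Projectivization Configuration
open scoped LinearAlgebra.Projectivization

variable {F : Type} [Field F] {q : ℕ}

theorem isClassicalUnital_of_diagonal_form {n : ℕ} {e : (Fin 3 → F) →ₗ[F] (Fin n → F)}
    (he : Function.Injective e) {V : Set (ProjPoint F n)} {a : Fin 3 → F} (hq : q ≠ 0)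
    (ha : ∀ i, a i ≠ 0 ∧ a i ^ q = a i) (hV : ∀ (y : Fin 3 → F) (hy : y ≠ 0),
      embed e he (Projectivization.mk F y hy) ∈ V ↔ ∑ i, a i * y i ^ (q + 1) = 0) :
    IsClassicalUnital F q n (LinearMap.range e) (V ∩ pointsIn F n (LinearMap.range e)) := by
  have hform (y : Fin 3 → F) :
      ∑ i, ∑ j, y i * diagonal a i j * y j ^ q = ∑ i, a i * y i ^ (q + 1) := by
    refine sum_congr rfl fun i _ => ?_
    simp only [diagonal_apply, mul_ite, ite_mul, mul_zero, zero_mul, sum_ite_eq, mem_univ, if_true]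
    ring
  refine ⟨e, LinearMap.ker_eq_bot.2 he, rfl, diagonal a, ?_, ?_, ?_⟩
  · rw [det_diagonal, isUnit_iff_ne_zero]
    exact prod_ne_zero_iff.2 fun i _ => (ha i).1
  · rw [diagonal_transpose, diagonal_map (by exact zero_pow hq)]
    exact congrArg diagonal (funext fun i => (ha i).2.symm)
  · ext P
    simp only [hform, Set.mem_ofPred_eq]
    constructor
    · rintro ⟨hPV, hP⟩
      rw [← range_embed he] at hP
      obtain ⟨x, rfl⟩ := hP
      rw [← x.mk_rep] at hPV ⊢
      exact ⟨x.rep, x.rep_nonzero, coe_embed_mk he _, (hV _ _).1 hPV⟩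
    · rintro ⟨y, hy, hP, hy0⟩
      obtain rfl : P = embed e he (Projectivization.mk F y hy) :=
        Subtype.ext (hP.trans (coe_embed_mk he hy).symm)
      exact ⟨(hV y hy).2 hy0, range_embed he ▸ Set.mem_range_self _⟩

variable [Fintype F] {f : (Fin 3 → F) → F} {B : Finset (ℙ F (Fin 3 → F))}

theorem isUnitalWord_of_comp_rep_eq_indicator (hf : f ∈ kernelCode F (Fin 3 → F))
    (hfB : f ∘ Projectivization.rep = (B : Set (ℙ F (Fin 3 → F))).indicator 1)
    (hcard : #B = q ^ 3 + 1) (hline : ∀ l : ℙ F (Fin 3 → F),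
      secantCard B l = 1 ∨ secantCard B l = q + 1) : IsUnitalWord q f := by
  classical
  have hsupp : codeSupport (f ∘ Projectivization.rep) = B := by
    rw [hfB, codeSupport_indicator_one]
  refine ⟨hf, fun {v} hv => ?_, fun {v t} ht hli => ?_, fun {u b t} ht hli => ?_⟩
  · rw [← apply_rep_mk hf hv, ← Function.comp_apply (f := f), hfB]
    exact (Set.indicator_eq_zero_or_self _ _ _).imp_right id
  · obtain ⟨l, hvl, htl⟩ := exists_line_of_linearIndependent hli
    rw [← secantCard_codeSupport_eq_card_fiber hf ht hli hvl htl, hsupp]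
    exact hline l
  · rw [← card_codeSupport_eq_sum_card_fiber hf ht hli, hsupp, hcard]

theorem exists_diagonal_form_of_mem_planeCode (hF : Fintype.card F = q ^ 2) (hq : 2 < q)
    (hB : (B : Set (ℙ F (Fin 3 → F))).indicator 1 ∈ planeCode F) (hcard : #B = q ^ 3 + 1)
    (hline : ∀ l : ℙ F (Fin 3 → F), secantCard B l = 1 ∨ secantCard B l = q + 1) :
    ∃ (g : (Fin 3 → F) ≃ₗ[F] (Fin 3 → F)) (a : Fin 3 → F), (∀ i, a i ≠ 0 ∧ a i ^ q = a i) ∧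
      ∀ (y : Fin 3 → F) (hy : g y ≠ 0),
        Projectivization.mk F (g y) hy ∈ B ↔ ∑ i, a i * y i ^ (q + 1) = 0 := by
  classical
  obtain ⟨f, hf, hfB⟩ := hB
  have happly (v : Fin 3 → F) (hv : v ≠ 0) : f v ≠ 0 ↔ Projectivization.mk F v hv ∈ B := by
    rw [← apply_rep_mk hf hv]
    have := congrFun hfB (Projectivization.mk F v hv)
    simp only [LinearMap.funLeft_apply] at this
    simp [this]
  obtain ⟨l⟩ : Nonempty (ℙ F (Fin 3 → F)) := inferInstance
  have hsecant : secantCard B l ≤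
      ProjectivePlane.order (ℙ F (Fin 3 → F)) (ℙ F (Fin 3 → F)) := by
    rw [order_eq_card, Nat.card_eq_fintype_card, hF]
    rcases hline l with h | h <;> nlinarith
  obtain ⟨x, -, hx⟩ := exists_mem_line_notMem hsecant
  obtain ⟨g, a, ha, hg⟩ := (isUnitalWord_of_comp_rep_eq_indicator hf hfB hcard hline)
    |>.exists_diagonal_form hF hq (finrank_fin_fun F) (t := x.rep)
      (by rwa [← not_iff_comm.1 (happly _ x.rep_nonzero), x.mk_rep]) x.rep_nonzero
  refine ⟨g, a, ha, fun y hy => ?_⟩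
  rw [← happly, hg y fun h => hy (by rw [h, map_zero])]

theorem isClassicalUnital_of_planeSection {p r : ℕ} [CharP F p] (hF : Fintype.card F = q ^ 2)
    (hq : 2 < q) {e : (Fin 3 → F) →ₗ[F] (Fin (r + 1) → F)} (he : Function.Injective e)
    {V : Set (ProjPoint F (r + 1))} (hV : charVec F p (r + 1) V ∈ hypCode F p (r + 1))
    (hcard : #(planeSection he V) = q ^ 3 + 1) (hline : ∀ l : ℙ F (Fin 3 → F),
      secantCard (planeSection he V) l = 1 ∨ secantCard (planeSection he V) l = q + 1) :
    IsClassicalUnital F q (r + 1) (LinearMap.range e)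
      (V ∩ pointsIn F (r + 1) (LinearMap.range e)) := by
  obtain ⟨g, a, ha, hg⟩ := exists_diagonal_form_of_mem_planeCode hF hq
    (indicator_planeSection_mem_planeCode he hV) hcard hline
  have hrange : LinearMap.range (e ∘ₗ g.toLinearMap) = LinearMap.range e := by
    rw [LinearMap.range_comp, LinearEquiv.range, Submodule.map_top]
  have hinj : Function.Injective (e ∘ₗ g.toLinearMap) := he.comp g.injective
  rw [← hrange]
  refine isClassicalUnital_of_diagonal_form hinj (by lia) ha fun y hy => ?_
  have hgy : g y ≠ 0 := g.map_ne_zero_iff.2 hy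
  have hcomp : embed (e ∘ₗ g.toLinearMap) hinj (Projectivization.mk F y hy) =
      embed e he (Projectivization.mk F (g y) hgy) :=
    Subtype.ext (by rw [coe_embed_mk, coe_embed_mk]; rfl)
  rw [hcomp, ← mem_planeSection, hg y hgy]

end Unitals

section LineSums

open Finset Projectivization Configuration
open scoped LinearAlgebra.Projectivization

variable {F : Type} [Field F] [Finite F] {n p : ℕ} [CharP F p]
  {e : (Fin 3 → F) →ₗ[F] (Fin n → F)} {V : Set (ProjPoint F n)} {S : Finset (ℙ F (Fin 3 → F))}

theorem charVec_embed_eq_sum_of_planeSection (he : Function.Injective e)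
    (hS : (planeSection he V : Set (ℙ F (Fin 3 → F))).indicator (1 : ℙ F (Fin 3 → F) → F) =
      ∑ l ∈ S, (pointsOn (ℙ F (Fin 3 → F)) l : Set (ℙ F (Fin 3 → F))).indicator 1)
    (x : ℙ F (Fin 3 → F)) : charVec F p n V (embed e he x) =
      ∑ l ∈ S, charVec F p n (pointsIn F n (lineIn e l)) (embed e he x) := by
  classical
  have : Fact p.Prime := ⟨CharP.char_is_prime F p⟩
  apply (ZMod.castHom dvd_rfl F).injective
  rw [← indicator_planeSection_apply, hS, Finset.sum_apply, map_sum]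
  refine sum_congr rfl fun l _ => ?_
  simp [charVec, Set.indicator_apply, apply_ite, embed_mem_pointsIn_lineIn_iff]

theorem charVec_inter_eq_sum_of_planeSection (he : Function.Injective e)
    (hS : (planeSection he V : Set (ℙ F (Fin 3 → F))).indicator (1 : ℙ F (Fin 3 → F) → F) =
      ∑ l ∈ S, (pointsOn (ℙ F (Fin 3 → F)) l : Set (ℙ F (Fin 3 → F))).indicator 1) :
    ∃ L : Finset (Submodule F (Fin n → F)), #L ≤ #S ∧
      (∀ ℓ ∈ L, ℓ ≤ LinearMap.range e ∧ finrank F ℓ = 2) ∧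
      charVec F p n (V ∩ pointsIn F n (LinearMap.range e)) =
        ∑ ℓ ∈ L, charVec F p n (pointsIn F n ℓ) := by
  classical
  refine ⟨S.image (lineIn e), card_image_le, ?_, funext fun P => ?_⟩
  · simp only [mem_image]
    rintro _ ⟨l, -, rfl⟩
    exact ⟨lineIn_le_range l, finrank_lineIn he l⟩
  rw [sum_image (lineIn_injective he).injOn, Finset.sum_apply]
  by_cases hP : P ∈ pointsIn F n (LinearMap.range e)
  · have hVP : charVec F p n (V ∩ pointsIn F n (LinearMap.range e)) P = charVec F p n V P := by
      simp [charVec, Set.indicator_apply, hP]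
    rw [hVP]
    rw [← range_embed he] at hP
    obtain ⟨x, rfl⟩ := hP
    exact charVec_embed_eq_sum_of_planeSection he hS x
  · have hline (l : ℙ F (Fin 3 → F)) : P ∉ pointsIn F n (lineIn e l) :=
      fun h => hP (le_trans h (lineIn_le_range l))
    simp [charVec, hP, hline]

end LineSums

section PlaneSectionsOfCodewords

open Finset Projectivization Configuration
open scoped LinearAlgebra.Projectivization

variable {F : Type} [Field F] [Fintype F] {p q r : ℕ} [CharP F p] {V : Set (ProjPoint F (r + 1))}

theorem planeSection_unital_or_sum_of_lines (hF : Fintype.card F = q ^ 2) (hqpp : IsPrimePow q)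
    (hq : 4 < q) (hr : 2 ≤ r) (hV : charVec F p (r + 1) V ∈ hypCode F p (r + 1))
    (hmod : (V.ncard : ZMod p) = 1)
    (hcard : (V.ncard : ℤ) * ((q : ℤ) ^ 2 - 1) ≤
      ((q : ℤ) ^ (r + 1) + (-1) ^ r) * ((q : ℤ) ^ r - (-1) ^ r))
    {e : (Fin 3 → F) →ₗ[F] (Fin (r + 1) → F)} (he : Function.Injective e)
    (hsize : secant F (r + 1) V (LinearMap.range e) ≤ q ^ 3 + 2 * q ^ 2) :
    (#(planeSection he V) = q ^ 3 + 1 ∧ ∀ l : ℙ F (Fin 3 → F),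
      secantCard (planeSection he V) l = 1 ∨ secantCard (planeSection he V) l = q + 1) ∨
    ∃ S : Finset (ℙ F (Fin 3 → F)), #S ≤ q + 1 ∧
      (planeSection he V : Set (ℙ F (Fin 3 → F))).indicator (1 : ℙ F (Fin 3 → F) → F) =
        ∑ l ∈ S, (pointsOn (ℙ F (Fin 3 → F)) l : Set (ℙ F (Fin 3 → F))).indicator 1 := by
  classical
  have hcardF : Nat.card F = q ^ 2 := by rw [Nat.card_eq_fintype_card, hF]
  refine unital_or_sum_of_lines hq hqpp (natCast_eq_zero_of_card hF)
    (order_eq_card.trans hcardF) (C := planeCode F)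
    (fun c hc => secantBound_codeSupport_of_mem_planeCode hc) indicator_pointsOn_mem_planeCode
    (indicator_planeSection_mem_planeCode he hV) (fun l => ?_) (fun l => ?_)
    ((card_planeSection he).trans_le hsize)
  · rw [secantCard_planeSection, ← map_natCast (ZMod.castHom dvd_rfl F),
      natCast_secant_eq_ncard char_dvd_natCard hV (finrank_lineIn he l).ge, hmod, map_one]
  · rw [secantCard_planeSection]
    exact secant_line_le_or_le hcardF hq hr hV hmod hcard (finrank_lineIn he l)

end PlaneSectionsOfCodewords

theorem natCast_ncard_eq_one_of_isQuasiHermitian {F : Type} [Field F] {p q r : ℕ} (hpq : p ∣ q)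
    (hr : r ≠ 0) {V : Set (ProjPoint F (r + 1))} (hV : IsQuasiHermitian F q r V) :
    (V.ncard : ZMod p) = 1 := by
  have hq : (q : ZMod p) = 0 := (ZMod.natCast_eq_zero_iff _ _).2 hpq
  have h := congrArg (Int.cast (R := ZMod p)) hV.1
  push_cast at h
  rw [hq, zero_pow two_ne_zero, zero_pow r.succ_ne_zero, zero_pow hr] at h
  have hsign : (-1 : ZMod p) ^ r * (-1) ^ r = 1 := by rw [← mul_pow]; simp
  linear_combination -h + hsign

end QuasiHermitian

open QuasiHermitian

theorem stmt9_general (p h q r : ℕ) (hp : p.Prime) (hq : q = p ^ h) (hq4 : 4 < q)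
    (F : Type) [Field F] [Fintype F] (hF : Fintype.card F = q ^ 2)
    (V : Set (ProjPoint F (r + 1))) (hmod : (V.ncard : ZMod p) = 1)
    (hcard : (V.ncard : ℤ) * ((q : ℤ) ^ 2 - 1) ≤
      ((q : ℤ) ^ (r + 1) + (-1) ^ r) * ((q : ℤ) ^ r - (-1) ^ r))
    (hcode : charVec F p (r + 1) V ∈ hypCode F p (r + 1))
    (π : Submodule F (Fin (r + 1) → F)) (hπ : finrank F π = 3)
    (hsize : secant F (r + 1) V π ≤ q ^ 3 + 2 * q ^ 2) :
    (∃ L : Finset (Submodule F (Fin (r + 1) → F)), L.card ≤ q + 1 ∧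
      (∀ ℓ ∈ L, ℓ ≤ π ∧ finrank F ℓ = 2) ∧
      charVec F p (r + 1) (V ∩ pointsIn F (r + 1) π)
        = ∑ ℓ ∈ L, charVec F p (r + 1) (pointsIn F (r + 1) ℓ)) ∨
    IsClassicalUnital F q (r + 1) π (V ∩ pointsIn F (r + 1) π) := by
  have := Fact.mk hp
  have hqpp : IsPrimePow q := hq ▸ hp.isPrimePow.pow (by rintro rfl; lia)
  have : CharP F p := charP_of_card_eq_prime_pow (f := h * 2) (by rw [hF, hq, pow_mul])
  have hr := π.finrank_le
  rw [hπ, finrank_fin_fun] at hr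
  obtain ⟨e, he, rfl⟩ := exists_injective_range_eq hπ
  rcases planeSection_unital_or_sum_of_lines hF hqpp hq4 (by lia) hcode hmod hcard he hsize with
    ⟨hB, hline⟩ | ⟨S, hS, hsum⟩
  · exact .inr (isClassicalUnital_of_planeSection hF (by lia) he hcode hB hline)
  · obtain ⟨L, hL, hlines, hLsum⟩ := charVec_inter_eq_sum_of_planeSection he hsum
    exact .inl ⟨L, hL.trans hS, hlines, hLsum⟩

/-- if a plane `π` meets `V` in at most `q³ + 2q²` points, then the
characteristic vector of `π ∩ V` is a sum of at most `q + 1` distinct lines of `π`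
(each with coefficient 1), or `π ∩ V` is a classical unital of `π`. -/
theorem stmt9 (p h q r : ℕ) (hp : p.Prime) (hh : 1 ≤ h) (hq : q = p ^ h) (hq4 : 4 < q)
    (hr : 3 ≤ r)
    (F : Type) [Field F] [Fintype F] (hF : Fintype.card F = q ^ 2)
    (V : Set (ProjPoint F (r + 1))) (hV : IsQuasiHermitian F q r V)
    (hcode : charVec F p (r + 1) V ∈ hypCode F p (r + 1))
    (π : Submodule F (Fin (r + 1) → F)) (hπ : finrank F π = 3)
    (hsize : secant F (r + 1) V π ≤ q ^ 3 + 2 * q ^ 2) :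
    (∃ L : Finset (Submodule F (Fin (r + 1) → F)), L.card ≤ q + 1 ∧
      (∀ ℓ ∈ L, ℓ ≤ π ∧ finrank F ℓ = 2) ∧
      charVec F p (r + 1) (V ∩ pointsIn F (r + 1) π)
        = ∑ ℓ ∈ L, charVec F p (r + 1) (pointsIn F (r + 1) ℓ)) ∨
    IsClassicalUnital F q (r + 1) π (V ∩ pointsIn F (r + 1) π) :=
  stmt9_general p h q r hp hq hq4 F hF V (natCast_ncard_eq_one_of_isQuasiHermitian
    (hq ▸ dvd_pow_self p (by lia)) (by lia) hV) hV.1.le hcode π hπ hsize
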